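/- arXiv:2303.13185 — 3 statements merged into one kernel-verified Lean document; each statement's English description precedes it below -/
import Mathlib

section
/- There exists a constant c such that for all binary strings x and y: |C(x, y) − (C(x) + C(y|x))| ≤ c·log(C(x, y) + 2). (Kolmogorov–Levin symmetry of information: the decomposition H(x,y) ∼ H(x) + H(y|x) holds with precision O(log H(x,y)).) -/
open scoped Classical

/-- Binary strings: finite sequences over `{0,1}`. -/
abbrev BStr := List Bool

/-- Complexity of `x` with respect to the description method `D`:
the minimal length of a `p` with `D(p) = x`, as an extended natural
(`⊤` if no such `p` exists). -/
noncomputable def Cw (D : BStr →. BStr) (x : BStr) : ℕ∞ :=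
  ⨅ (p : BStr) (_ : x ∈ D p), (p.length : ℕ∞)

/-- A description method is optimal if it is partial computable and gives
complexity at most that of any other partial computable description method,
up to an additive constant. -/
def OptimalDM (D : BStr →. BStr) : Prop :=
  Partrec D ∧ ∀ D' : BStr →. BStr, Partrec D' →
    ∃ c : ℕ, ∀ x : BStr, Cw D x ≤ Cw D' x + (c : ℕ∞)

/-- Plain Kolmogorov complexity (finite value) w.r.t. a description method. -/
noncomputable def C (D : BStr →. BStr) (x : BStr) : ℕ := (Cw D x).toNat

/-- Conditional complexity of `x` given `y` w.r.t. the conditional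
description method `E`. -/
noncomputable def CwCond (E : BStr → BStr →. BStr) (x y : BStr) : ℕ∞ :=
  ⨅ (p : BStr) (_ : x ∈ E p y), (p.length : ℕ∞)

/-- Optimal conditional description method. -/
def OptimalCDM (E : BStr → BStr →. BStr) : Prop :=
  Partrec₂ E ∧ ∀ E' : BStr → BStr →. BStr, Partrec₂ E' →
    ∃ c : ℕ, ∀ x y : BStr, CwCond E x y ≤ CwCond E' x y + (c : ℕ∞)

/-- Conditional Kolmogorov complexity (finite value). -/
noncomputable def Ccond (E : BStr → BStr →. BStr) (x y : BStr) : ℕ :=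
  (CwCond E x y).toNat

/-- `enc` is a computable injective encoding of finite sets of binary strings
as binary strings (computability is expressed on the level of lists of
elements, since every finite set is the set of members of a list). -/
def SetEncoding (enc : Finset BStr → BStr) : Prop :=
  Function.Injective enc ∧ Computable (fun l : List BStr => enc l.toFinset)

/-- A computable step-counting semantics for the description method `D`:
`ev t p` is the output of `D` on program `p` within `t` computation steps
(`none` if the computation has not converged within `t` steps). -/
structure TimedDM (D : BStr →. BStr) where
  ev : ℕ → BStr → Option BStr
  computable : Computable₂ ev
  mono : ∀ {t t' : ℕ} {p y : BStr}, t ≤ t' → ev t p = some y → ev t' p = some y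
  spec : ∀ p y : BStr, y ∈ D p ↔ ∃ t : ℕ, ev t p = some y

/-- Time-bounded complexity `C^t(x)`: the minimal length of a program
producing `x` within `t` steps (`⊤` if there is none). -/
noncomputable def Cwt (ev : ℕ → BStr → Option BStr) (t : ℕ) (x : BStr) : ℕ∞ :=
  ⨅ (p : BStr) (_ : ev t p = some x), (p.length : ℕ∞)

/-- `B D k`: the largest natural number whose binary representation has
complexity at most `k` (naturals are identified with their binary
representations via `Nat.bits`). -/
noncomputable def B (D : BStr →. BStr) (k : ℕ) : ℕ :=
  sSup {m : ℕ | Cw D (Nat.bits m) ≤ (k : ℕ∞)}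

/-- Kolmogorov's `(α,β)`-stochasticity: `x` belongs to a finite set `S` of
complexity at most `α` in which it is random up to `β`. -/
def Stochastic (D : BStr →. BStr) (enc : Finset BStr → BStr)
    (α β : ℕ) (x : BStr) : Prop :=
  ∃ S : Finset BStr, x ∈ S ∧ C D (enc S) ≤ α ∧
    Real.logb 2 S.card - β ≤ (C D x : ℝ)

/-- The binary entropy function (with the convention `H(0) = H(1) = 0`,
which holds automatically since `logb 2 0 = 0` in Mathlib). -/
noncomputable def binH (p : ℝ) : ℝ :=
  -(p * Real.logb 2 p) - (1 - p) * Real.logb 2 (1 - p)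

/-!
The inequality `C(x, y) ≤ C(x) + C(y|x) + O(log C(x))` concatenates programs, the first preceded by
its length. For the converse put `n = C(x, y)` and let `2 ^ k` be the approximate number of `z` with
`C(x, z) ≤ n`. These `z` can be enumerated from `x` and `n`, so `y` is described by its index, which
has about `k` bits. Fewer than `2 ^ (n + 1)` pairs have complexity at most `n`, so at most
`2 ^ (n + 1 - k)` strings have `2 ^ k` or more such `z`, and these strings can be enumerated from
`n` and `k`: thus `x` is described by its index, which has about `n - k` bits.
-/

namespace KolmogorovComplexity

section BinarySize

theorem length_bits_le_of_lt_two_pow {i m : ℕ} (hi : i < 2 ^ m) : i.bits.length ≤ m := by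
  rw [Nat.size_eq_bits_len]
  exact Nat.size_le.2 hi

theorem size_mul_le (a b : ℕ) : (a * b).size ≤ a.size + b.size := by
  rw [Nat.size_le, pow_add]
  exact Nat.mul_lt_mul'' (Nat.lt_size_self a) (Nat.lt_size_self b)

theorem size_pair_le {a b n : ℕ} (ha : a ≤ n) (hb : b ≤ n) :
    (Nat.pair a b).size ≤ 2 * (n + 1).size := by
  have hpair : Nat.pair a b < (n + 1) ^ 2 :=
    (Nat.pair_lt_max_add_one_sq a b).trans_le (Nat.pow_le_pow_left (by omega) 2)
  rw [Nat.size_le, mul_comm, pow_mul]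
  exact hpair.trans (Nat.pow_lt_pow_left (Nat.lt_size_self (n + 1)) two_ne_zero)

theorem size_le_two_mul_logb {n : ℕ} (hn : 2 ≤ n) : (n.size : ℝ) ≤ 2 * Real.logb 2 n := by
  have hsize : n.size ≤ Nat.log 2 n + 1 :=
    Nat.size_le.2 (Nat.lt_pow_succ_log_self one_lt_two n)
  have hlog : 1 ≤ Nat.log 2 n := Nat.log_pos one_lt_two hn
  calc (n.size : ℝ) ≤ 2 * Nat.log 2 n := by exact_mod_cast (by omega : n.size ≤ 2 * Nat.log 2 n)
    _ ≤ 2 * Real.logb 2 n := by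
      gcongr
      exact_mod_cast Real.natLog_le_logb n 2

end BinarySize

section Counting

theorem encard_length_le_add_one_le (n : ℕ) :
    {p : BStr | p.length ≤ n}.encard + 1 ≤ 2 ^ (n + 1) := by
  induction n with
  | zero => simp [one_add_one_eq_two]
  | succ n ih =>
    set S := {p : BStr | p.length ≤ n}
    have hcover : {p : BStr | p.length ≤ n + 1} ⊆
        {[]} ∪ (List.cons true '' S ∪ List.cons false '' S) := by
      rintro (_ | ⟨_ | _, p⟩) hp <;> simp_all [S]
    calc {p : BStr | p.length ≤ n + 1}.encard + 1
        ≤ 1 + (S.encard + S.encard) + 1 := by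
          gcongr
          refine (Set.encard_le_encard hcover).trans ((Set.encard_union_le _ _).trans ?_)
          exact add_le_add (Set.encard_singleton _).le ((Set.encard_union_le _ _).trans
            (add_le_add (Set.encard_image_le _ _) (Set.encard_image_le _ _)))
      _ = 2 * (S.encard + 1) := by ring
      _ ≤ 2 * 2 ^ (n + 1) := by gcongr
      _ = 2 ^ (n + 1 + 1) := by ring

theorem encard_setOf_le_encard_fiber_mul_le {α β : Type*} (A : Set (α × β)) (m : ℕ) :
    {x | (m : ℕ∞) ≤ {y | (x, y) ∈ A}.encard}.encard * m ≤ A.encard := by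
  set H := {x | (m : ℕ∞) ≤ {y | (x, y) ∈ A}.encard}
  have hfiber (x : H) : ∃ g : Fin m → β, g.Injective ∧ ∀ i, (x.1, g i) ∈ A := by
    obtain ⟨T, hT, hTm⟩ := Set.exists_subset_encard_eq x.2
    lift T to Finset β using Set.finite_of_encard_eq_coe hTm
    rw [Set.encard_coe_eq_coe_finsetCard, ENat.natCast_inj] at hTm
    let index := (T.equivFinOfCardEq hTm).symm
    exact ⟨fun i => index i, Subtype.val_injective.comp index.injective, fun i => hT (index i).2⟩
  choose g hg hgA using hfiber
  let f : H × Fin m → A := fun q => ⟨(q.1, g q.1 q.2), hgA q.1 q.2⟩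
  have hf : f.Injective := by
    rintro ⟨x, i⟩ ⟨x', i'⟩ h
    obtain ⟨hx, hi⟩ := Prod.mk.inj (congrArg Subtype.val h)
    obtain rfl := Subtype.ext hx
    exact congrArg (Prod.mk x) (hg x hi)
  simpa [ENat.card_prod] using ENat.card_le_card_of_injective hf

end Counting

section Enumeration

variable {β : Type*}

/-- The values enumerated by `e` before stage `s`, without repetition, the most recent first. -/
noncomputable def enumUpTo (e : ℕ → Option β) : ℕ → List β
  | 0 => []
  | s + 1 => (e s).elim (enumUpTo e s) fun b => (enumUpTo e s).insert b

theorem nodup_enumUpTo (e : ℕ → Option β) (s : ℕ) : (enumUpTo e s).Nodup := by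
  induction s with
  | zero => exact List.nodup_nil
  | succ s ih => cases h : e s <;> simp [enumUpTo, h, ih, List.Nodup.insert]

theorem mem_enumUpTo {e : ℕ → Option β} {s : ℕ} {b : β} :
    b ∈ enumUpTo e s ↔ ∃ t < s, e t = some b := by
  induction s with
  | zero => simp [enumUpTo]
  | succ s ih =>
    cases h : e s <;>
      simp [enumUpTo, Order.lt_add_one_iff, le_iff_lt_or_eq, or_and_right, exists_or, h, ih,
        eq_comm, or_comm]

theorem enumUpTo_suffix (e : ℕ → Option β) {s t : ℕ} (hst : s ≤ t) :
    enumUpTo e s <:+ enumUpTo e t := by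
  induction t, hst using Nat.le_induction with
  | base => exact List.suffix_rfl
  | succ t _ ih =>
    refine ih.trans ?_
    cases h : e t <;> simp [enumUpTo, h, List.suffix_insert]

theorem length_enumUpTo_le_encard (e : ℕ → Option β) (s : ℕ) :
    ((enumUpTo e s).length : ℕ∞) ≤ {b | ∃ t, e t = some b}.encard := by
  rw [← List.toFinset_card_of_nodup (nodup_enumUpTo e s), ← Set.encard_coe_eq_coe_finsetCard]
  refine Set.encard_le_encard fun b hb => ?_
  obtain ⟨t, -, ht⟩ := mem_enumUpTo.1 (List.mem_toFinset.1 hb)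
  exact ⟨t, ht⟩

theorem exists_subset_enumUpTo {e : ℕ → Option β} (T : Finset β)
    (hT : ∀ b ∈ T, ∃ t, e t = some b) : ∃ s, ∀ b ∈ T, b ∈ enumUpTo e s := by
  choose! t ht using hT
  exact ⟨T.sup t + 1, fun b hb =>
    mem_enumUpTo.2 ⟨t b, Nat.lt_succ_of_le (Finset.le_sup hb), ht b hb⟩⟩

theorem le_encard_iff_exists_le_length_enumUpTo {e : ℕ → Option β} {m : ℕ} :
    (m : ℕ∞) ≤ {b | ∃ t, e t = some b}.encard ↔ ∃ s, m ≤ (enumUpTo e s).length := by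
  constructor
  · intro hm
    obtain ⟨T, hT, hTm⟩ := Set.exists_subset_encard_eq hm
    lift T to Finset β using Set.finite_of_encard_eq_coe hTm
    obtain ⟨s, hs⟩ := exists_subset_enumUpTo T hT
    refine ⟨s, ?_⟩
    rw [← List.toFinset_card_of_nodup (nodup_enumUpTo e s), ← ENat.natCast_le_natCast, ← hTm,
      Set.encard_coe_eq_coe_finsetCard, ENat.natCast_le_natCast]
    exact Finset.card_le_card fun b hb => List.mem_toFinset.2 (hs b hb)
  · rintro ⟨s, hs⟩
    exact (Nat.cast_le.2 hs).trans (length_enumUpTo_le_encard e s)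

end Enumeration

section RecursivelyEnumerable

variable {α β : Type*} [Primcodable α] [Primcodable β]

theorem exists_computable_enum {R : α → β → Prop} (hR : REPred fun q : α × β => R q.1 q.2) :
    ∃ e : α → ℕ → Option β, Computable₂ e ∧ ∀ a b, R a b ↔ ∃ s, e a s = some b := by
  obtain ⟨c, hc⟩ := Nat.Partrec.Code.exists_code.1 hR
  have halts_iff (a : α) (b : β) :
      R a b ↔ ∃ t, (c.evaln t (Encodable.encode (a, b))).isSome := by
    have hdom : (c.eval (Encodable.encode (a, b))).Dom ↔ R a b := by
      simp [hc, Part.assert]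
    simp only [← hdom, Part.dom_iff_mem, Nat.Partrec.Code.evaln_complete,
      Option.isSome_iff_exists, Option.mem_def]
    exact exists_comm
  refine ⟨fun a s => (Encodable.decode (α := β × ℕ) s).bind fun z =>
    (c.evaln z.2 (Encodable.encode (a, z.1))).map fun _ => z.1, ?_, fun a b => ?_⟩
  · refine Computable.option_bind (Computable.decode.comp .snd) (Computable.option_map ?_ ?_)
    · exact Nat.Partrec.Code.primrec_evaln.to_comp.comp
        (((Computable.snd.comp .snd).pair (.const c)).pair
          (Computable.encode.comp ((Computable.fst.comp .fst).pair (Computable.fst.comp .snd))))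
    · exact Computable.fst.comp (Computable.snd.comp .fst)
  · simp only [halts_iff, Option.bind_eq_some_iff, Option.map_eq_some_iff, Option.isSome_iff_exists]
    constructor
    · rintro ⟨t, w, hw⟩
      exact ⟨Encodable.encode (b, t), (b, t), Encodable.encodek _, w, hw, rfl⟩
    · rintro ⟨-, ⟨b, t⟩, -, w, hw, rfl⟩
      exact ⟨t, w, hw⟩

theorem rePred_exists {R : α → β → Prop} (hR : REPred fun q : α × β => R q.1 q.2) :
    REPred fun a => ∃ b, R a b := by
  obtain ⟨e, he, hmem⟩ := exists_computable_enum hR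
  refine (Partrec.rfindOpt he).dom_re.of_eq fun a => ?_
  simp only [Nat.rfindOpt_dom, Option.mem_def, hmem]
  exact exists_comm

theorem computable₂_list_insert [DecidableEq β] :
    Computable₂ (List.insert : β → List β → List β) := by
  have hmem : PrimrecRel fun (b : β) (l : List β) => b ∈ l :=
    PrimrecPred.of_eq (Primrec.nat_lt.comp Primrec.list_idxOf (Primrec.list_length.comp .snd))
      fun q => List.idxOf_lt_length_iff
  refine (Primrec.of_eq (Primrec.ite hmem Primrec.snd Primrec.list_cons) fun q => ?_).to_comp
  exact (List.insert_eq_ite q.1 q.2).symm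

theorem computable₂_enumUpTo {e : α → ℕ → Option β} (he : Computable₂ e) :
    Computable₂ fun a => enumUpTo (e a) := by
  have hstep : Computable₂ fun (q : α × ℕ) (z : ℕ × List β) =>
      (e q.1 z.1).elim z.2 fun b => z.2.insert b := by
    have hvalue : Computable fun w : (α × ℕ) × (ℕ × List β) => e w.1.1 w.2.1 :=
      he.comp (Computable.fst.comp .fst) (Computable.fst.comp .snd)
    have hinsert : Computable₂ fun (w : (α × ℕ) × (ℕ × List β)) (b : β) => w.2.2.insert b :=
      computable₂_list_insert.comp .snd (Computable.snd.comp (Computable.snd.comp .fst))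
    refine (Computable.option_casesOn hvalue (Computable.snd.comp .snd) hinsert).of_eq fun w => ?_
    cases h : e w.1.1 w.2.1 <;> simp [h]
  have hrec := Computable.nat_rec (f := fun q : α × ℕ => q.2) (g := fun _ => ([] : List β))
    Computable.snd (.const []) hstep
  refine hrec.of_eq fun ⟨a, s⟩ => ?_
  induction s with
  | zero => rfl
  | succ s ih => simp only [enumUpTo, ← ih]

theorem rePred_le_encard {R : α → β → Prop} (hR : REPred fun q : α × β => R q.1 q.2) :
    REPred fun q : α × ℕ => (q.2 : ℕ∞) ≤ {b | R q.1 b}.encard := by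
  obtain ⟨e, he, hmem⟩ := exists_computable_enum hR
  have hlength : Computable₂ fun (q : α × ℕ) (s : ℕ) => (enumUpTo (e q.1) s).length :=
    Computable.list_length.comp
      ((computable₂_enumUpTo he).comp (Computable.fst.comp .fst) .snd)
  have hstage : REPred fun q : (α × ℕ) × ℕ => q.1.2 ≤ (enumUpTo (e q.1.1) q.2).length :=
    (Computable.computablePred (Primrec.nat_le.decide.to_comp.comp
      (Computable.snd.comp .fst) hlength)).to_re
  refine (rePred_exists (R := fun q s => q.2 ≤ (enumUpTo (e q.1) s).length) hstage).of_eq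
    fun q => ?_
  simp only [hmem, le_encard_iff_exists_le_length_enumUpTo]

theorem exists_partrec_nth {R : α → β → Prop} (hR : REPred fun q : α × β => R q.1 q.2) :
    ∃ nth : α → ℕ →. β, Partrec₂ nth ∧
      ∀ a b (N : ℕ), R a b → {b | R a b}.encard ≤ N → ∃ i < N, b ∈ nth a i := by
  obtain ⟨e, he, hmem⟩ := exists_computable_enum hR
  refine ⟨fun a i => Nat.rfindOpt fun s => (enumUpTo (e a) s).reverse[i]?, ?_,
    fun a b N hb hN => ?_⟩
  · exact Partrec.rfindOpt (Computable.list_getElem?.comp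
      (Computable.list_reverse.comp
        ((computable₂_enumUpTo he).comp (Computable.fst.comp .fst) .snd))
      (Computable.snd.comp .fst))
  · obtain ⟨t, ht⟩ := (hmem a b).1 hb
    have hmem_stage : b ∈ (enumUpTo (e a) (t + 1)).reverse :=
      List.mem_reverse.2 (mem_enumUpTo.2 ⟨t, t.lt_succ_self, ht⟩)
    obtain ⟨i, hi, hib⟩ := List.getElem_of_mem hmem_stage
    have hlength : (enumUpTo (e a) (t + 1)).length ≤ N := by
      simp only [hmem] at hN
      exact Nat.cast_le.1 ((length_enumUpTo_le_encard (e a) (t + 1)).trans hN)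
    refine ⟨i, (List.length_reverse ▸ hi).trans_le hlength, ?_⟩
    refine (Nat.rfindOpt_mono fun {v s s'} hss' hv => ?_).2
      ⟨t + 1, List.getElem?_eq_some_iff.2 ⟨hi, hib⟩⟩
    obtain ⟨his, rfl⟩ := List.getElem?_eq_some_iff.1 hv
    exact List.prefix_iff_getElem?.1 (List.reverse_prefix.2 (enumUpTo_suffix (e a) hss')) i his

end RecursivelyEnumerable

section SelfDelimiting

/-- The number with binary digits `l`, least significant first: the left inverse of `Nat.bits`,
used to read numbers off programs. -/
def bitsVal (l : BStr) : ℕ := l.foldr Nat.bit 0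

theorem bitsVal_bits (n : ℕ) : bitsVal n.bits = n := by
  induction n using Nat.binaryRec' with
  | zero => simp [bitsVal]
  | bit b n h ih =>
    rw [Nat.bits_append_bit _ _ h]
    exact congrArg (Nat.bit b) ih

theorem computable_bitsVal : Computable bitsVal := by
  have hdouble : Primrec fun q : BStr × Bool × ℕ => 2 * q.2.2 :=
    Primrec.nat_mul.comp (.const 2) (Primrec.snd.comp .snd)
  have hbit : Primrec₂ fun (_ : BStr) (q : Bool × ℕ) => Nat.bit q.1 q.2 :=
    (Primrec.cond (Primrec.fst.comp .snd) (Primrec.succ.comp hdouble) hdouble).of_eq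
      fun q => by cases h : q.2.1 <;> simp [h]
  exact (Primrec.list_foldr .id (.const 0) hbit).to_comp

/-- A self-delimiting encoding of a number `n` in front of a string `r`: the length of the binary
expansion of `n` in unary, terminated by `0`, then this expansion, then `r`. -/
def selfDelim (n : ℕ) (r : BStr) : BStr :=
  List.replicate n.size true ++ false :: (n.bits ++ r)

/-- The decoder of `selfDelim`. -/
def decodeSelfDelim (s : BStr) : ℕ × BStr :=
  let m := s.idxOf false
  let t := s.drop (m + 1)
  (bitsVal (t.take m), t.drop m)

theorem length_selfDelim (n : ℕ) (r : BStr) :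
    (selfDelim n r).length = r.length + 2 * n.size + 1 := by
  simp only [selfDelim, List.length_append, List.length_replicate, List.length_cons,
    Nat.size_eq_bits_len]
  ring

theorem decodeSelfDelim_selfDelim (n : ℕ) (r : BStr) :
    decodeSelfDelim (selfDelim n r) = (n, r) := by
  have hidx : (selfDelim n r).idxOf false = n.size := by
    rw [selfDelim, List.idxOf_append_of_notMem (by simp)]
    simp
  have hdrop : (selfDelim n r).drop (n.size + 1) = n.bits ++ r := by
    simp [selfDelim, List.drop_append]
  simp only [decodeSelfDelim, hidx, hdrop]
  simp only [← Nat.size_eq_bits_len, List.take_left, List.drop_left, bitsVal_bits]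

theorem computable_decodeSelfDelim : Computable decodeSelfDelim := by
  have hidx : Computable fun s : BStr => s.idxOf false :=
    (Primrec.list_idxOf.comp (.const false) .id).to_comp
  have hdrop : Computable fun s : BStr => s.drop (s.idxOf false + 1) :=
    Primrec.list_drop.to_comp.comp (Computable.succ.comp hidx) .id
  exact (computable_bitsVal.comp (Primrec.list_take.to_comp.comp hidx hdrop)).pair
    (Primrec.list_drop.to_comp.comp hidx hdrop)

end SelfDelimiting

section Complexity

variable {D : BStr →. BStr} {E : BStr → BStr →. BStr}

theorem iInf_length_le_iff {P : BStr → Prop} {n : ℕ} :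
    ⨅ (p : BStr) (_ : P p), (p.length : ℕ∞) ≤ n ↔ ∃ p, P p ∧ p.length ≤ n := by
  simp only [← ENat.lt_natCast_add_one_iff, iInf_lt_iff, exists_prop]
  norm_cast
  simp only [Nat.lt_add_one_iff]

theorem Cw_le_iff {v : BStr} {n : ℕ} : Cw D v ≤ n ↔ ∃ p, v ∈ D p ∧ p.length ≤ n :=
  iInf_length_le_iff

theorem CwCond_le_iff {x y : BStr} {n : ℕ} :
    CwCond E x y ≤ n ↔ ∃ p, x ∈ E p y ∧ p.length ≤ n :=
  iInf_length_le_iff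

theorem rePred_Cw_le (hD : Partrec D) : REPred fun q : BStr × ℕ => Cw D q.1 ≤ q.2 := by
  have hcheck : Computable₂ fun (w : (BStr × ℕ) × BStr) (u : BStr) =>
      bif decide (u = w.1.1) && decide (w.2.length ≤ w.1.2) then some () else none :=
    Computable.cond
      (Primrec.and.to_comp.comp
        (Primrec.eq.decide.to_comp.comp .snd (Computable.fst.comp (Computable.fst.comp .fst)))
        (Primrec.nat_le.decide.to_comp.comp
          (Computable.list_length.comp (Computable.snd.comp .fst))
          (Computable.snd.comp (Computable.fst.comp .fst))))
      (.const _) (.const _)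
  have hverify : Partrec fun w : (BStr × ℕ) × BStr => (D w.2).bind fun u =>
      ((bif decide (u = w.1.1) && decide (w.2.length ≤ w.1.2) then some () else none :
        Option Unit) : Part Unit) :=
    (hD.comp .snd).bind hcheck.ofOption
  refine (rePred_exists (R := fun (q : BStr × ℕ) p => q.1 ∈ D p ∧ p.length ≤ q.2)
    (hverify.dom_re.of_eq fun w => ?_)).of_eq fun q => Cw_le_iff.symm
  simp only [Part.dom_iff_mem, Part.mem_bind_iff, Part.mem_coe, Bool.cond_eq_ite, Option.mem_def,
    Option.ite_none_right_eq_some, Bool.and_eq_true, decide_eq_true_eq]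
  constructor
  · rintro ⟨-, u, hu, ⟨rfl, hlength⟩, -⟩
    exact ⟨hu, hlength⟩
  · rintro ⟨hu, hlength⟩
    exact ⟨(), w.1.1, hu, ⟨rfl, hlength⟩, trivial⟩

theorem encard_Cw_comp_le {γ : Type*} (D : BStr →. BStr) {f : γ → BStr} (hf : f.Injective)
    (n : ℕ) : {a | Cw D (f a) ≤ n}.encard ≤ 2 ^ (n + 1) := by
  choose! program hprogram using fun a (ha : Cw D (f a) ≤ n) => Cw_le_iff.1 ha
  have hinj : Set.InjOn program {a | Cw D (f a) ≤ n} := fun a ha b hb hab =>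
    hf (Part.mem_unique (hprogram a ha).1 (hab ▸ (hprogram b hb).1))
  calc {a | Cw D (f a) ≤ n}.encard
      ≤ {p : BStr | p.length ≤ n}.encard :=
        Set.encard_le_encard_of_injOn (fun a ha => (hprogram a ha).2) hinj
    _ ≤ 2 ^ (n + 1) := le_self_add.trans (encard_length_le_add_one_le n)

theorem coe_C (hD : OptimalDM D) (v : BStr) : (C D v : ℕ∞) = Cw D v := by
  obtain ⟨c, hc⟩ := hD.2 (fun p => Part.some p) Partrec.some
  have hself : Cw (fun p => Part.some p) v ≤ v.length :=
    Cw_le_iff.2 ⟨v, Part.mem_some v, le_rfl⟩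
  refine ENat.natCast_toNat (ne_top_of_le_ne_top ?_ ((hc v).trans (add_le_add_left hself _)))
  exact ENat.natCast_ne_top (v.length + c)

theorem coe_Ccond (hE : OptimalCDM E) (x y : BStr) : (Ccond E x y : ℕ∞) = CwCond E x y := by
  obtain ⟨c, hc⟩ := hE.2 (fun p _ => Part.some p) Computable.fst
  have hself : CwCond (fun p _ => Part.some p) x y ≤ x.length :=
    CwCond_le_iff.2 ⟨x, Part.mem_some x, le_rfl⟩
  refine ENat.natCast_toNat (ne_top_of_le_ne_top ?_ ((hc x y).trans (add_le_add_left hself _)))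
  exact ENat.natCast_ne_top (x.length + c)

theorem exists_C_le_length_add_size (hD : OptimalDM D) {F : ℕ × BStr →. BStr} (hF : Partrec F) :
    ∃ c : ℕ, ∀ n p v, v ∈ F (n, p) → C D v ≤ p.length + 2 * n.size + c := by
  obtain ⟨c, hc⟩ := hD.2 _ (hF.comp computable_decodeSelfDelim)
  refine ⟨c + 1, fun n p v hv => ENat.toNat_le_of_le_natCast ((hc v).trans ?_)⟩
  have hlength : Cw (fun s => F (decodeSelfDelim s)) v ≤ (p.length + 2 * n.size + 1 : ℕ) :=
    Cw_le_iff.2 ⟨selfDelim n p, by rwa [decodeSelfDelim_selfDelim], (length_selfDelim n p).le⟩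
  refine (add_le_add_left hlength _).trans_eq ?_
  push_cast
  ring

theorem exists_Ccond_le_length_add_size (hE : OptimalCDM E) {F : ℕ × BStr → BStr →. BStr}
    (hF : Partrec₂ F) :
    ∃ c : ℕ, ∀ n p v y, v ∈ F (n, p) y → Ccond E v y ≤ p.length + 2 * n.size + c := by
  obtain ⟨c, hc⟩ := hE.2 (fun s y => F (decodeSelfDelim s) y)
    (hF.comp (computable_decodeSelfDelim.comp .fst) .snd)
  refine ⟨c + 1, fun n p v y hv => ENat.toNat_le_of_le_natCast ((hc v y).trans ?_)⟩
  have hlength : CwCond (fun s y => F (decodeSelfDelim s) y) v y ≤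
      (p.length + 2 * n.size + 1 : ℕ) :=
    CwCond_le_iff.2 ⟨selfDelim n p, by rwa [decodeSelfDelim_selfDelim], (length_selfDelim n p).le⟩
  refine (add_le_add_left hlength _).trans_eq ?_
  push_cast
  ring

theorem exists_C_le_of_encard_le (hD : OptimalDM D) {R : ℕ → BStr → Prop}
    (hR : REPred fun q : ℕ × BStr => R q.1 q.2) :
    ∃ c : ℕ, ∀ n m v, R n v → {w | R n w}.encard ≤ 2 ^ m → C D v ≤ m + 2 * n.size + c := by
  obtain ⟨nth, hnth, hindex⟩ := exists_partrec_nth hR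
  obtain ⟨c, hc⟩ := exists_C_le_length_add_size hD (F := fun q => nth q.1 (bitsVal q.2))
    (hnth.comp .fst (computable_bitsVal.comp .snd))
  refine ⟨c, fun n m v hv hm => ?_⟩
  obtain ⟨i, hi, hiv⟩ := hindex n v (2 ^ m) hv (mod_cast hm)
  refine (hc n i.bits v (by rwa [bitsVal_bits])).trans ?_
  gcongr
  exact length_bits_le_of_lt_two_pow hi

theorem exists_Ccond_le_of_encard_le (hE : OptimalCDM E) {R : ℕ → BStr → BStr → Prop}
    (hR : REPred fun q : (ℕ × BStr) × BStr => R q.1.1 q.1.2 q.2) :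
    ∃ c : ℕ, ∀ n m y v, R n y v → {w | R n y w}.encard ≤ 2 ^ m →
      Ccond E v y ≤ m + 2 * n.size + c := by
  obtain ⟨nth, hnth, hindex⟩ := exists_partrec_nth (R := fun a : ℕ × BStr => R a.1 a.2) hR
  obtain ⟨c, hc⟩ := exists_Ccond_le_length_add_size hE
    (F := fun q y => nth (q.1, y) (bitsVal q.2))
    (hnth.comp ((Computable.fst.comp .fst).pair .snd)
      (computable_bitsVal.comp (Computable.snd.comp .fst)))
  refine ⟨c, fun n m y v hv hm => ?_⟩
  obtain ⟨i, hi, hiv⟩ := hindex (n, y) v (2 ^ m) hv (mod_cast hm)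
  refine (hc n i.bits v y (by rwa [bitsVal_bits])).trans ?_
  gcongr
  exact length_bits_le_of_lt_two_pow hi

end Complexity

section SymmetryOfInformation

variable {D : BStr →. BStr} {E : BStr → BStr →. BStr} {pair : BStr → BStr → BStr}

theorem exists_C_pair_le (hD : OptimalDM D) (hE : OptimalCDM E) (hpc : Computable₂ pair) :
    ∃ c : ℕ, ∀ x y, C D (pair x y) ≤ C D x + Ccond E y x + 2 * (C D x).size + c := by
  let F : ℕ × BStr →. BStr := fun q =>
    (D (q.2.take q.1)).bind fun x => (E (q.2.drop q.1) x).map (pair x)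
  have hF : Partrec F := by
    have hsplit : Computable fun q : ℕ × BStr => q.2.take q.1 :=
      Primrec.list_take.to_comp.comp .fst .snd
    have hrest : Computable fun q : ℕ × BStr => q.2.drop q.1 :=
      Primrec.list_drop.to_comp.comp .fst .snd
    exact (hD.1.comp hsplit).bind
      ((hE.1.comp (hrest.comp .fst) .snd).map (hpc.comp (Computable.snd.comp .fst) .snd))
  obtain ⟨c, hc⟩ := exists_C_le_length_add_size hD hF
  refine ⟨c, fun x y => ?_⟩
  obtain ⟨p, hp, hp_length⟩ := Cw_le_iff.1 (coe_C hD x).ge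
  obtain ⟨q, hq, hq_length⟩ := CwCond_le_iff.1 (coe_Ccond hE y x).ge
  have hpq : pair x y ∈ F (p.length, p ++ q) := by
    simp only [F, List.take_left, List.drop_left]
    exact Part.mem_bind hp (Part.mem_map _ hq)
  calc C D (pair x y) ≤ (p ++ q).length + 2 * p.length.size + c := hc _ _ _ hpq
    _ ≤ C D x + Ccond E y x + 2 * (C D x).size + c := by
      rw [List.length_append]
      gcongr
      exact Nat.size_le_size hp_length

theorem rePred_Cw_pair_le (hD : Partrec D) (hpc : Computable₂ pair) :
    REPred fun q : (ℕ × BStr) × BStr => Cw D (pair q.1.2 q.2) ≤ q.1.1 :=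
  (rePred_Cw_le hD).comp ((hpc.comp (Computable.snd.comp .fst) .snd).pair
    (Computable.fst.comp .fst))

theorem exists_Ccond_le_of_encard_fiber_le (hD : Partrec D) (hE : OptimalCDM E)
    (hpc : Computable₂ pair) :
    ∃ c : ℕ, ∀ (n m : ℕ) (x y : BStr), Cw D (pair x y) ≤ n →
      {y | Cw D (pair x y) ≤ n}.encard ≤ 2 ^ m → Ccond E y x ≤ m + 2 * n.size + c :=
  exists_Ccond_le_of_encard_le hE (R := fun n x y => Cw D (pair x y) ≤ n)
    (rePred_Cw_pair_le hD hpc)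

theorem rePred_two_pow_le_encard_fiber (hD : Partrec D) (hpc : Computable₂ pair) :
    REPred fun q : ℕ × BStr =>
      2 ^ q.1.unpair.2 ≤ {y | Cw D (pair q.2 y) ≤ q.1.unpair.1}.encard := by
  have hpow : Primrec₂ ((· ^ ·) : ℕ → ℕ → ℕ) := Primrec₂.unpaired'.1 Nat.Primrec.pow
  have hunpair : Primrec fun q : ℕ × BStr => q.1.unpair := Primrec.unpair.comp .fst
  have harg : Primrec fun q : ℕ × BStr => ((q.1.unpair.1, q.2), 2 ^ q.1.unpair.2) :=
    ((Primrec.fst.comp hunpair).pair .snd).pair (hpow.comp (.const 2) (Primrec.snd.comp hunpair))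
  have hcomp := (rePred_le_encard (R := fun (a : ℕ × BStr) y => Cw D (pair a.2 y) ≤ a.1)
    (rePred_Cw_pair_le hD hpc)).comp harg.to_comp
  exact REPred.of_eq hcomp fun q => by simp only [Nat.cast_pow, Nat.cast_ofNat]

theorem encard_two_pow_le_encard_fiber_le
    (hpi : Function.Injective fun q : BStr × BStr => pair q.1 q.2) {n k : ℕ} (hk : k ≤ n + 1) :
    {x | 2 ^ k ≤ {y | Cw D (pair x y) ≤ n}.encard}.encard ≤ 2 ^ (n + 1 - k) := by
  have hcount := encard_setOf_le_encard_fiber_mul_le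
    {q : BStr × BStr | Cw D (pair q.1 q.2) ≤ n} (2 ^ k)
  push_cast at hcount
  refine (ENat.mul_le_mul_right_iff (a := 2 ^ k) (by simp) (by simp)).1 ?_
  rw [← pow_add, Nat.sub_add_cancel hk]
  exact hcount.trans (encard_Cw_comp_le D hpi n)

theorem exists_C_le_of_two_pow_le_encard_fiber (hD : OptimalDM D) (hpc : Computable₂ pair)
    (hpi : Function.Injective fun q : BStr × BStr => pair q.1 q.2) :
    ∃ c : ℕ, ∀ (n k : ℕ) (x : BStr), 2 ^ k ≤ {y | Cw D (pair x y) ≤ n}.encard →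
      C D x + k ≤ n + 4 * (n + 2).size + c := by
  obtain ⟨c, hc⟩ := exists_C_le_of_encard_le hD
    (R := fun i x => 2 ^ i.unpair.2 ≤ {y | Cw D (pair x y) ≤ i.unpair.1}.encard)
    (rePred_two_pow_le_encard_fiber hD.1 hpc)
  refine ⟨c + 1, fun n k x hx => ?_⟩
  have hk : k ≤ n + 1 := by
    have hpow := hx.trans (encard_Cw_comp_le D (hpi.comp (Prod.mk_right_injective x)) n)
    exact (Nat.pow_le_pow_iff_right one_lt_two).1 (mod_cast hpow)
  have hsize : (Nat.pair n k).size ≤ 2 * (n + 2).size := size_pair_le n.le_succ hk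
  have hC := hc (Nat.pair n k) (n + 1 - k) x (by rwa [Nat.unpair_pair])
    (by simpa only [Nat.unpair_pair] using encard_two_pow_le_encard_fiber_le hpi hk)
  omega

theorem exists_C_add_Ccond_le (hD : OptimalDM D) (hE : OptimalCDM E) (hpc : Computable₂ pair)
    (hpi : Function.Injective fun q : BStr × BStr => pair q.1 q.2) :
    ∃ c : ℕ, ∀ x y, C D x + Ccond E y x ≤
      C D (pair x y) + 6 * (C D (pair x y) + 2).size + c := by
  obtain ⟨c, hc⟩ := exists_C_le_of_two_pow_le_encard_fiber hD hpc hpi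
  obtain ⟨d, hd⟩ := exists_Ccond_le_of_encard_fiber_le hD.1 hE hpc
  refine ⟨c + d + 1, fun x y => ?_⟩
  set n := C D (pair x y)
  have hy : Cw D (pair x y) ≤ n := (coe_C hD _).ge
  set fiber := {z | Cw D (pair x z) ≤ n}
  have hfinite : fiber.Finite := Set.finite_of_encard_le_coe (k := 2 ^ (n + 1))
    (mod_cast encard_Cw_comp_le D (hpi.comp (Prod.mk_right_injective x)) n)
  have hpos : fiber.ncard ≠ 0 := Set.ncard_ne_zero_of_mem (a := y) hy hfinite
  set k := Nat.log 2 fiber.ncard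
  have hx : C D x + k ≤ n + 4 * (n + 2).size + c := by
    refine hc n k x ?_
    rw [← hfinite.cast_ncard_eq]
    exact_mod_cast Nat.pow_log_le_self 2 hpos
  have hyx : Ccond E y x ≤ (k + 1) + 2 * n.size + d := by
    refine hd n (k + 1) x y hy ?_
    rw [← hfinite.cast_ncard_eq]
    exact_mod_cast (Nat.lt_pow_succ_log_self one_lt_two fiber.ncard).le
  have hsize : n.size ≤ (n + 2).size := Nat.size_le_size (by omega)
  omega

theorem exists_symmetry_of_information (hD : OptimalDM D) (hE : OptimalCDM E)
    (hpc : Computable₂ pair) (hpi : Function.Injective fun q : BStr × BStr => pair q.1 q.2) :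
    ∃ c : ℕ, ∀ x y,
      C D (pair x y) ≤ C D x + Ccond E y x + c * (C D (pair x y) + 2).size ∧
      C D x + Ccond E y x ≤ C D (pair x y) + c * (C D (pair x y) + 2).size := by
  obtain ⟨c, hc⟩ := exists_C_pair_le hD hE hpc
  obtain ⟨d, hd⟩ := exists_C_add_Ccond_le hD hE hpc hpi
  refine ⟨2 * (d + 7).size + c + d + 8, fun x y => ?_⟩
  have hupper := hc x y
  have hlower := hd x y
  set n := C D (pair x y)
  have hCx : C D x ≤ (d + 7) * (n + 2) := by
    have hsize_le : (n + 2).size ≤ n + 2 := Nat.size_le.2 Nat.lt_two_pow_self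
    nlinarith
  have hCx_size : (C D x).size ≤ (d + 7).size + (n + 2).size :=
    (Nat.size_le_size hCx).trans (size_mul_le _ _)
  have hsize : 1 ≤ (n + 2).size := Nat.size_pos.2 (by omega)
  constructor <;> nlinarith

end SymmetryOfInformation

end KolmogorovComplexity

/-- **Kolmogorov–Levin symmetry of information**:
`C(x,y) = C(x) + C(y|x)` with precision `O(log C(x,y))`. -/
theorem stmt9 (D : BStr →. BStr) (hD : OptimalDM D)
    (E : BStr → BStr →. BStr) (hE : OptimalCDM E)
    (pair : BStr → BStr → BStr) (hpc : Computable₂ pair)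
    (hpi : Function.Injective fun q : BStr × BStr => pair q.1 q.2) :
    ∃ c : ℝ, ∀ x y : BStr,
      |(C D (pair x y) : ℝ) - ((C D x : ℝ) + (Ccond E y x : ℝ))|
        ≤ c * Real.logb 2 ((C D (pair x y) : ℝ) + 2) := by
  obtain ⟨c, hc⟩ := KolmogorovComplexity.exists_symmetry_of_information hD hE hpc hpi
  refine ⟨2 * c, fun x y => ?_⟩
  obtain ⟨hupper, hlower⟩ := hc x y
  set n := C D (pair x y)
  have hsize : ((n + 2).size : ℝ) ≤ 2 * Real.logb 2 (n + 2) := by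
    exact_mod_cast KolmogorovComplexity.size_le_two_mul_logb (Nat.le_add_left 2 n)
  calc |(n : ℝ) - (C D x + Ccond E y x)| ≤ c * (n + 2).size := by
        rw [abs_sub_le_iff, sub_le_iff_le_add', sub_le_iff_le_add']
        exact_mod_cast And.intro hupper hlower
    _ ≤ c * (2 * Real.logb 2 (n + 2)) := by gcongr
    _ = 2 * c * Real.logb 2 (n + 2) := by ring
end

section
/- Define the mutual information I(x : y) = C(y) − C(y|x). There exists a constant c such that for all binary strings x and y: |I(x : y) − I(y : x)| ≤ c·log(C(x, y) + 2). (Symmetry of algorithmic mutual information with logarithmic precision.) -/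
open scoped Classical

/-!
Given `n`, the pairs `(x, y)` with `C(x, y) ≤ n` can be enumerated, and there are at most
`2 ^ (n + 1)` of them. Suppose that about `2 ^ m` of them have first component `x`. Given `x`, the
string `y` is determined by its index among these, which takes `m` bits; and `x` is one of the at
most `2 ^ (n + 1 - m)` strings with that many continuations, which can be enumerated given `n` and
`m`, so that its index takes `n + 1 - m` bits. Hence `C(x) + C(y|x) ≤ C(x, y) + O(log C(x, y))`;
concatenating programs for `x` and for `y` given `x` gives the converse. This is the
Kolmogorov–Levin theorem. By symmetry both `C(x) + C(y|x)` and `C(y) + C(x|y)` are `C(x, y)` up to a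
logarithmic term, and their difference is that of the two informations.
-/

section Enumeration

variable {α β σ : Type*} [Primcodable α] [Primcodable β] [Primcodable σ]

theorem exists_computable_approx {f : α →. σ} (hf : Partrec f) :
    ∃ e : ℕ → α → Option σ, Computable₂ e ∧ ∀ a b, b ∈ f a ↔ ∃ t, e t a = some b := by
  obtain ⟨code, hcode⟩ := Nat.Partrec.Code.exists_code.1 hf
  refine ⟨fun t a => (code.evaln t (Encodable.encode a)).bind Encodable.decode, ?_, fun a b => ?_⟩
  · have hevaln : Computable fun q : ℕ × α => code.evaln q.1 (Encodable.encode q.2) :=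
      Nat.Partrec.Code.primrec_evaln.to_comp.comp
        ((Computable.fst.pair (Computable.const code)).pair (Computable.encode.comp Computable.snd))
    exact hevaln.option_bind (Computable.decode.comp Computable.snd)
  · have heval : ∀ k, k ∈ code.eval (Encodable.encode a) ↔ ∃ b ∈ f a, Encodable.encode b = k := by
      simp [hcode]
    simp only [Option.bind_eq_some_iff]
    constructor
    · intro hb
      obtain ⟨t, ht⟩ := Nat.Partrec.Code.evaln_complete.1 ((heval _).2 ⟨b, hb, rfl⟩)
      exact ⟨t, _, ht, Encodable.encodek b⟩
    · rintro ⟨t, k, hk, hdec⟩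
      obtain ⟨b', hb', rfl⟩ := (heval k).1 (Nat.Partrec.Code.evaln_sound hk)
      rw [Encodable.encodek, Option.some.injEq] at hdec
      exact hdec ▸ hb'

theorem rePred_exists_of_computable {f : α → β → Bool} (hf : Computable₂ f) :
    REPred fun a => ∃ b, f a b := by
  have hsearch : Computable₂ fun (a : α) (n : ℕ) =>
      ((Encodable.decode n : Option β).map (f a)).getD false :=
    Computable.option_getD (Computable.option_map (Computable.decode.comp Computable.snd)
      (hf.comp (Computable.fst.comp Computable.fst) Computable.snd)) (Computable.const false)
  refine (Partrec.rfind hsearch.partrec₂).dom_re.of_eq fun a => ?_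
  simp only [Nat.rfind_dom', PFun.coe_val, Part.mem_some_iff]
  constructor
  · rintro ⟨n, hn, -⟩
    cases h : (Encodable.decode n : Option β) with
    | none => simp [h] at hn
    | some b => exact ⟨b, by simpa [h] using hn.symm⟩
  · rintro ⟨b, hb⟩
    exact ⟨Encodable.encode b, by simp [hb], fun _ => trivial⟩

theorem rePred_comp {p : β → Prop} (hp : REPred p) {f : α → β} (hf : Computable f) :
    REPred fun a => p (f a) :=
  Partrec.comp hp hf

theorem rePred_exists_enumeration {r : α → β → Prop} (hr : REPred fun q : α × β => r q.1 q.2) :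
    ∃ e : α → ℕ → Option β, Computable₂ e ∧ ∀ a b, r a b ↔ ∃ t, e a t = some b := by
  obtain ⟨e, he, hspec⟩ := exists_computable_approx hr
  refine ⟨fun a n => (Encodable.decode n : Option (ℕ × β)).bind fun w =>
    (e w.1 (a, w.2)).map fun _ => w.2, ?_, fun a b => ?_⟩
  · refine Computable.option_bind (Computable.decode.comp Computable.snd)
      (Computable.option_map (he.comp (Computable.fst.comp Computable.snd) ?_) ?_)
    · exact (Computable.fst.comp Computable.fst).pair (Computable.snd.comp Computable.snd)
    · exact Computable.snd.comp (Computable.snd.comp Computable.fst)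
  · have hiff : r a b ↔ ∃ t, e t (a, b) = some () := by simp [← hspec]
    rw [hiff]
    constructor
    · rintro ⟨t, ht⟩
      exact ⟨Encodable.encode (t, b), by simp [ht]⟩
    · rintro ⟨n, hn⟩
      simp only [Option.bind_eq_some_iff, Option.map_eq_some_iff] at hn
      obtain ⟨⟨t, _⟩, -, _, ht, rfl⟩ := hn
      exact ⟨t, ht⟩

end Enumeration

section EnumList

variable {β : Type*} [DecidableEq β]

/-- The distinct values a partial enumeration `e` has produced before stage `t`, most recent first,
so that the list at an earlier stage is a suffix of the list at a later one. -/
def enumList (e : ℕ → Option β) : ℕ → List β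
  | 0 => []
  | t + 1 => (e t).elim (enumList e t) fun b => (enumList e t).insert b

/-- The `i`-th distinct value, in order of appearance, of a partial enumeration `e`;
undefined if there are at most `i` values. -/
def enumNth (e : ℕ → Option β) (i : ℕ) : Part β :=
  Nat.rfindOpt fun t => (enumList e t).reverse[i]?

variable {e : ℕ → Option β}

theorem mem_enumList {t : ℕ} {b : β} : b ∈ enumList e t ↔ ∃ s < t, e s = some b := by
  induction t with
  | zero => simp [enumList]
  | succ t ih =>
    rw [Nat.exists_lt_succ_right, ← ih]
    cases h : e t <;> simp [enumList, h, or_comm, eq_comm]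

theorem nodup_enumList (e : ℕ → Option β) (t : ℕ) : (enumList e t).Nodup := by
  induction t with
  | zero => exact List.nodup_nil
  | succ t ih => cases h : e t <;> simp [enumList, h, ih, List.Nodup.insert]

theorem enumList_suffix_succ (e : ℕ → Option β) (t : ℕ) :
    enumList e t <:+ enumList e (t + 1) := by
  cases h : e t <;> simp [enumList, h, List.suffix_insert]

theorem enumList_suffix (e : ℕ → Option β) {s t : ℕ} (h : s ≤ t) :
    enumList e s <:+ enumList e t :=
  Nat.le_induction List.suffix_rfl (fun t _ ih => ih.trans (enumList_suffix_succ e t)) t h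

theorem length_enumList_le_encard (e : ℕ → Option β) (t : ℕ) :
    ((enumList e t).length : ℕ∞) ≤ {b | ∃ t, e t = some b}.encard := by
  rw [← List.toFinset_card_of_nodup (nodup_enumList e t), ← Set.encard_coe_eq_coe_finsetCard]
  refine Set.encard_le_encard fun b hb => ?_
  rw [List.coe_toFinset] at hb
  obtain ⟨s, -, hs⟩ := mem_enumList.1 hb
  exact ⟨s, hs⟩

theorem natCast_le_encard_iff_exists_enumList {m : ℕ} :
    (m : ℕ∞) ≤ {b | ∃ t, e t = some b}.encard ↔ ∃ t, m ≤ (enumList e t).length := by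
  refine ⟨fun h => ?_, fun ⟨t, ht⟩ => (Nat.cast_le.2 ht).trans (length_enumList_le_encard e t)⟩
  obtain ⟨S, hS, hcard⟩ := Set.exists_subset_encard_eq h
  lift S to Finset β using Set.finite_of_encard_eq_coe hcard
  rw [Set.encard_coe_eq_coe_finsetCard, Nat.cast_inj] at hcard
  have hstage : ∀ b ∈ S, ∃ t, e t = some b := fun b hb => hS hb
  choose! τ hτ using hstage
  refine ⟨S.sup τ + 1, ?_⟩
  rw [← hcard, ← List.toFinset_card_of_nodup (nodup_enumList e _)]
  exact Finset.card_le_card fun b hb => List.mem_toFinset.2 <|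
    mem_enumList.2 ⟨τ b, Nat.lt_succ_of_le (Finset.le_sup hb), hτ b hb⟩

theorem exists_mem_enumNth {b : β} (hb : ∃ t, e t = some b) :
    ∃ i : ℕ, (i : ℕ∞) < {b | ∃ t, e t = some b}.encard ∧ b ∈ enumNth e i := by
  obtain ⟨t, ht⟩ := hb
  have hmem : b ∈ (enumList e (t + 1)).reverse :=
    List.mem_reverse.2 (mem_enumList.2 ⟨t, t.lt_succ_self, ht⟩)
  obtain ⟨i, hi, hib⟩ := List.mem_iff_getElem.1 hmem
  have hlen := length_enumList_le_encard e (t + 1)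
  rw [← List.length_reverse] at hlen
  refine ⟨i, (Nat.cast_lt.2 hi).trans_le hlen, (Nat.rfindOpt_mono ?_).2 ⟨t + 1, ?_⟩⟩
  · intro b s t hst hs
    obtain ⟨l, hl⟩ := List.reverse_prefix.2 (enumList_suffix e hst)
    obtain ⟨hlt, -⟩ := List.getElem?_eq_some_iff.1 hs
    rwa [Option.mem_def, ← hl, List.getElem?_append_left hlt]
  · exact List.getElem?_eq_some_iff.2 ⟨hi, hib⟩

variable {α : Type*} [Primcodable α] [Primcodable β]

theorem primrec₂_list_insert : Primrec₂ fun (b : β) (l : List β) => l.insert b := by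
  have hmem : PrimrecRel fun (l : List β) b => ∃ a ∈ l, a = b :=
    PrimrecRel.exists_mem_list Primrec.eq
  have hmem' : PrimrecPred fun q : β × List β => q.1 ∈ q.2 :=
    (hmem.comp Primrec.snd Primrec.fst).of_eq (by simp)
  exact (Primrec.ite hmem' Primrec.snd Primrec.list_cons).of_eq (by simp [List.insert])

theorem computable₂_enumList {e : α → ℕ → Option β} (he : Computable₂ e) :
    Computable₂ fun a => enumList (e a) := by
  have hinsert : Computable₂ fun (r : (α × ℕ) × (ℕ × List β)) (b : β) => r.2.2.insert b :=
    primrec₂_list_insert.to_comp.comp Computable.snd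
      (Computable.snd.comp (Computable.snd.comp Computable.fst))
  have hvalue : Computable fun r : (α × ℕ) × (ℕ × List β) => e r.1.1 r.2.1 :=
    he.comp (Computable.fst.comp Computable.fst) (Computable.fst.comp Computable.snd)
  have hstep : Computable₂ fun (q : α × ℕ) (w : ℕ × List β) =>
      (e q.1 w.1).elim w.2 fun b => w.2.insert b := by
    refine (Computable.option_casesOn hvalue (Computable.snd.comp Computable.snd) hinsert).of_eq ?_
    rintro ⟨⟨a, t⟩, s, l⟩
    simp only
    cases e a s <;> rfl
  refine (Computable.nat_rec Computable.snd (Computable.const []) hstep).of_eq ?_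
  rintro ⟨a, t⟩
  induction t with
  | zero => rfl
  | succ t ih => exact congrArg (fun l => (e a t).elim l fun b => l.insert b) ih

theorem partrec₂_enumNth {e : α → ℕ → Option β} (he : Computable₂ e) :
    Partrec₂ fun a => enumNth (e a) :=
  Partrec.rfindOpt <| Computable.list_getElem?.comp
    (Computable.list_reverse.comp <|
      (computable₂_enumList he).comp (Computable.fst.comp Computable.fst) Computable.snd)
    (Computable.snd.comp Computable.fst)

end EnumList

section SectionCardinality

variable {α β : Type*}

section Computability

variable [Primcodable α] [Primcodable β] {r : α → β → Prop}

theorem rePred_le_encard (hr : REPred fun q : α × β => r q.1 q.2) :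
    REPred fun q : α × ℕ => (q.2 : ℕ∞) ≤ {b | r q.1 b}.encard := by
  obtain ⟨e, he, hspec⟩ := rePred_exists_enumeration hr
  simp only [hspec, natCast_le_encard_iff_exists_enumList]
  refine (rePred_exists_of_computable (f := fun (q : α × ℕ) t =>
    decide (q.2 ≤ (enumList (e q.1) t).length)) ?_).of_eq (by simp)
  exact Primrec.nat_le.decide.to_comp.comp (Computable.snd.comp Computable.fst) <|
    Computable.list_length.comp <|
      (computable₂_enumList he).comp (Computable.fst.comp Computable.fst) Computable.snd

theorem exists_partrec_index (hr : REPred fun q : α × β => r q.1 q.2) :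
    ∃ g : α → ℕ →. β, Partrec₂ g ∧
      ∀ a b, r a b → ∃ i : ℕ, (i : ℕ∞) < {b | r a b}.encard ∧ b ∈ g a i := by
  obtain ⟨e, he, hspec⟩ := rePred_exists_enumeration hr
  refine ⟨_, partrec₂_enumNth he, fun a b hab => ?_⟩
  simp only [hspec] at hab ⊢
  exact exists_mem_enumNth hab

end Computability

theorem mul_encard_setOf_le_encard_fiber (r : α → β → Prop) (k : ℕ) :
    k * {a | (k : ℕ∞) ≤ {b | r a b}.encard}.encard ≤ {q : α × β | r q.1 q.2}.encard := by
  set A := {a | (k : ℕ∞) ≤ {b | r a b}.encard}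
  have hfiber (a : A) : ∃ f : Fin k → β, f.Injective ∧ ∀ i, r a (f i) := by
    obtain ⟨t, ht, hcard⟩ := Set.exists_subset_encard_eq a.2
    lift t to Finset β using Set.finite_of_encard_eq_coe hcard
    rw [Set.encard_coe_eq_coe_finsetCard, Nat.cast_inj] at hcard
    let f := (t.equivFinOfCardEq hcard).symm
    exact ⟨fun i => f i, Subtype.val_injective.comp f.injective, fun i => ht (f i).2⟩
  choose f hinj hf using hfiber
  let g (q : Fin k × A) : {q : α × β | r q.1 q.2} := ⟨(q.2, f q.2 q.1), hf q.2 q.1⟩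
  have hg : g.Injective := by
    rintro ⟨i, a⟩ ⟨j, b⟩ h
    obtain ⟨ha, hi⟩ := Prod.mk.inj (Subtype.mk.inj h)
    obtain rfl := Subtype.ext ha
    exact Prod.ext (hinj a hi) rfl
  simpa [ENat.card_prod] using ENat.card_le_card_of_injective hg

end SectionCardinality

section SelfDelimiting

/-- The number whose binary digits, least significant first, are `s`. -/
def natOfBits (s : BStr) : ℕ := s.foldr Nat.bit 0

theorem natOfBits_bits (n : ℕ) : natOfBits n.bits = n := by
  induction n using Nat.binaryRec' with
  | zero => simp [natOfBits]
  | bit b n hn ih => rw [Nat.bits_append_bit n b hn]; exact congrArg (Nat.bit b) ih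

theorem primrec_natOfBits : Primrec natOfBits := by
  have hbit : Primrec₂ fun (_ : BStr) (q : Bool × ℕ) => Nat.bit q.1 q.2 :=
    Primrec.cond (Primrec.fst.comp Primrec.snd)
      (Primrec.nat_double_succ.comp (Primrec.snd.comp Primrec.snd))
      (Primrec.nat_double.comp (Primrec.snd.comp Primrec.snd))
  exact Primrec.list_foldr Primrec.id (Primrec.const 0) hbit

/-- An encoding is self-delimiting if a computable decoder recovers `a` from any string that
starts with the code of `a`, together with the rest of that string. -/
def IsSelfDelimiting {α : Type*} [Primcodable α] (enc : α → BStr) : Prop :=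
  ∃ dec : BStr → α × BStr, Computable dec ∧ ∀ a s, dec (enc a ++ s) = (a, s)

theorem IsSelfDelimiting.prod {α β : Type*} [Primcodable α] [Primcodable β] {f : α → BStr}
    {g : β → BStr} (hf : IsSelfDelimiting f) (hg : IsSelfDelimiting g) :
    IsSelfDelimiting fun q : α × β => f q.1 ++ g q.2 := by
  obtain ⟨decf, hdecf, hf⟩ := hf
  obtain ⟨decg, hdecg, hg⟩ := hg
  have hrest : Computable fun s => decg (decf s).2 := hdecg.comp (Computable.snd.comp hdecf)
  refine ⟨fun s => (((decf s).1, (decg (decf s).2).1), (decg (decf s).2).2), ?_, fun q s => ?_⟩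
  · exact ((Computable.fst.comp hdecf).pair (Computable.fst.comp hrest)).pair
      (Computable.snd.comp hrest)
  · simp [hf, hg]

/-- The self-delimiting code of a number: its number of binary digits in unary, a separator, and
the digits. -/
def natCode (n : ℕ) : BStr := List.replicate n.size true ++ false :: n.bits

theorem length_natCode (n : ℕ) : (natCode n).length = 2 * n.size + 1 := by
  simp only [natCode, List.length_append, List.length_replicate, List.length_cons,
    Nat.size_eq_bits_len]
  ring

theorem isSelfDelimiting_natCode : IsSelfDelimiting natCode := by
  have hidx : Primrec fun s : BStr => s.idxOf false :=
    Primrec.list_idxOf.comp (Primrec.const false) Primrec.id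
  have hdrop : Primrec fun s : BStr => s.drop (s.idxOf false + 1) :=
    Primrec.list_drop.comp (Primrec.succ.comp hidx) Primrec.id
  refine ⟨fun s => (natOfBits ((s.drop (s.idxOf false + 1)).take (s.idxOf false)),
    (s.drop (s.idxOf false + 1)).drop (s.idxOf false)), Primrec.to_comp ?_, fun n s => ?_⟩
  · exact (primrec_natOfBits.comp (Primrec.list_take.comp hidx hdrop)).pair
      (Primrec.list_drop.comp hidx hdrop)
  · have hi : (natCode n ++ s).idxOf false = n.bits.length := by
      simp [natCode, Nat.size_eq_bits_len, List.idxOf_append_of_notMem]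
    have hd : (natCode n ++ s).drop (n.bits.length + 1) = n.bits ++ s := by
      simp [natCode, Nat.size_eq_bits_len, List.drop_append]
    simp only [hi, hd, List.take_left, List.drop_left, natOfBits_bits]

end SelfDelimiting

theorem encard_setOf_length_le (n : ℕ) : {p : BStr | p.length ≤ n}.encard ≤ 2 ^ (n + 1) := by
  have hlength (k : ℕ) : {p : BStr | p.length = k}.encard = 2 ^ k := by
    have hcard := ENat.card_eq_coe_fintype_card (α := List.Vector Bool k)
    rw [card_vector, Fintype.card_bool] at hcard
    exact_mod_cast hcard
  induction n with
  | zero => simp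
  | succ n ih =>
    have hunion : {p : BStr | p.length ≤ n + 1} = {p | p.length ≤ n} ∪ {p | p.length = n + 1} := by
      ext p
      exact Nat.le_succ_iff
    rw [hunion, pow_succ, mul_two]
    exact (Set.encard_union_le _ _).trans (add_le_add ih (hlength _).le)

section DescriptionMethods

variable {D : BStr →. BStr} {E : BStr → BStr →. BStr}

theorem iInf_length_le_iff {P : BStr → Prop} {n : ℕ} :
    ⨅ (p : BStr) (_ : P p), (p.length : ℕ∞) ≤ n ↔ ∃ p, P p ∧ p.length ≤ n := by
  simp only [← ENat.lt_add_one_iff (ENat.natCast_ne_top n), iInf_lt_iff, exists_prop]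
  simp only [ENat.lt_add_one_iff (ENat.natCast_ne_top n), Nat.cast_le]

theorem Cw_le_iff {x : BStr} {n : ℕ} : Cw D x ≤ n ↔ ∃ p, x ∈ D p ∧ p.length ≤ n :=
  iInf_length_le_iff

theorem CwCond_le_iff {x y : BStr} {n : ℕ} : CwCond E x y ≤ n ↔ ∃ p, x ∈ E p y ∧ p.length ≤ n :=
  iInf_length_le_iff

theorem encard_setOf_Cw_le (D : BStr →. BStr) (n : ℕ) :
    {x | Cw D x ≤ n}.encard ≤ 2 ^ (n + 1) := by
  have hprogram : ∀ x ∈ {x | Cw D x ≤ n}, ∃ p, x ∈ D p ∧ p.length ≤ n := fun x hx =>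
    Cw_le_iff.1 hx
  choose! f hf hlength using hprogram
  refine (Set.encard_le_encard_of_injOn (fun x hx => hlength x hx) ?_).trans
    (encard_setOf_length_le n)
  intro x hx x' hx' h
  exact Part.mem_unique (hf x hx) (h ▸ hf x' hx')

theorem rePred_Cw_le (hD : Partrec D) : REPred fun q : ℕ × BStr => Cw D q.2 ≤ q.1 := by
  obtain ⟨e, he, hspec⟩ := exists_computable_approx hD
  have htest : Computable₂ fun (q : ℕ × BStr) (w : ℕ × BStr) =>
      decide (e w.1 w.2 = some q.2) && decide (w.2.length ≤ q.1) := by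
    refine Primrec.and.to_comp.comp ?_ ?_
    · exact Primrec.eq.decide.to_comp.comp
        (he.comp (Computable.fst.comp Computable.snd) (Computable.snd.comp Computable.snd))
        (Computable.option_some.comp (Computable.snd.comp Computable.fst))
    · exact Primrec.nat_le.decide.to_comp.comp
        (Computable.list_length.comp (Computable.snd.comp Computable.snd))
        (Computable.fst.comp Computable.fst)
  refine (rePred_exists_of_computable htest).of_eq fun q => ?_
  simp only [Cw_le_iff, hspec, ← exists_and_right, Bool.and_eq_true, decide_eq_true_eq, Prod.exists]
  exact exists_comm

theorem natCast_C (hD : OptimalDM D) (x : BStr) : (C D x : ℕ∞) = Cw D x := by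
  obtain ⟨c, hc⟩ := hD.2 (fun p => Part.some p) Computable.id
  have hid : Cw (fun p => Part.some p) x ≤ x.length := Cw_le_iff.2 ⟨x, Part.mem_some x, le_rfl⟩
  have hle : Cw D x ≤ (x.length + c : ℕ) := by
    push_cast
    exact (hc x).trans (by gcongr)
  exact ENat.natCast_toNat (ne_top_of_le_ne_top (ENat.natCast_ne_top _) hle)

theorem natCast_Ccond (hE : OptimalCDM E) (x y : BStr) : (Ccond E x y : ℕ∞) = CwCond E x y := by
  obtain ⟨c, hc⟩ := hE.2 (fun p _ => Part.some p) Computable.fst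
  have hid : CwCond (fun p _ => Part.some p) x y ≤ x.length :=
    CwCond_le_iff.2 ⟨x, Part.mem_some x, le_rfl⟩
  have hle : CwCond E x y ≤ (x.length + c : ℕ) := by
    push_cast
    exact (hc x y).trans (by gcongr)
  exact ENat.natCast_toNat (ne_top_of_le_ne_top (ENat.natCast_ne_top _) hle)

theorem exists_program (hD : OptimalDM D) (x : BStr) : ∃ p, x ∈ D p ∧ p.length = C D x := by
  obtain ⟨p, hp, hle⟩ := Cw_le_iff.1 (natCast_C hD x).ge
  have hge := (natCast_C hD x).trans_le (Cw_le_iff.2 ⟨p, hp, le_rfl⟩)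
  exact ⟨p, hp, hle.antisymm (Nat.cast_le.1 hge)⟩

theorem exists_program_cond (hE : OptimalCDM E) (x y : BStr) :
    ∃ p, x ∈ E p y ∧ p.length = Ccond E x y := by
  obtain ⟨p, hp, hle⟩ := CwCond_le_iff.1 (natCast_Ccond hE x y).ge
  have hge := (natCast_Ccond hE x y).trans_le (CwCond_le_iff.2 ⟨p, hp, le_rfl⟩)
  exact ⟨p, hp, hle.antisymm (Nat.cast_le.1 hge)⟩

variable {α : Type*} [Primcodable α] {enc : α → BStr}

theorem C_le_of_partrec (hD : OptimalDM D) (henc : IsSelfDelimiting enc)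
    {h : α × BStr →. BStr} (hh : Partrec h) :
    ∃ c : ℕ, ∀ a p x, x ∈ h (a, p) → C D x ≤ (enc a).length + p.length + c := by
  obtain ⟨dec, hdec, hspec⟩ := henc
  obtain ⟨c, hc⟩ := hD.2 (fun s => h (dec s)) (hh.comp hdec)
  refine ⟨c, fun a p x hx => ENat.toNat_le_of_le_natCast ?_⟩
  have hle : Cw (fun s => h (dec s)) x ≤ (enc a ++ p).length :=
    Cw_le_iff.2 ⟨enc a ++ p, by rwa [hspec], le_rfl⟩
  rw [List.length_append] at hle
  push_cast at hle ⊢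
  exact (hc x).trans (by gcongr)

theorem Ccond_le_of_partrec (hE : OptimalCDM E) (henc : IsSelfDelimiting enc)
    {h : α × BStr → BStr →. BStr} (hh : Partrec₂ h) :
    ∃ c : ℕ, ∀ a p x y, x ∈ h (a, p) y → Ccond E x y ≤ (enc a).length + p.length + c := by
  obtain ⟨dec, hdec, hspec⟩ := henc
  obtain ⟨c, hc⟩ := hE.2 (fun s y => h (dec s) y)
    (hh.comp (hdec.comp Computable.fst) Computable.snd)
  refine ⟨c, fun a p x y hx => ENat.toNat_le_of_le_natCast ?_⟩
  have hle : CwCond (fun s y => h (dec s) y) x y ≤ (enc a ++ p).length :=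
    CwCond_le_iff.2 ⟨enc a ++ p, by rwa [hspec], le_rfl⟩
  rw [List.length_append] at hle
  push_cast at hle ⊢
  exact (hc x y).trans (by gcongr)

theorem length_bits_le_of_lt_encard {β : Type*} {s : Set β} {i k : ℕ} (hi : (i : ℕ∞) < s.encard)
    (hs : s.encard ≤ 2 ^ k) : i.bits.length ≤ k := by
  rw [Nat.size_eq_bits_len, Nat.size_le]
  exact_mod_cast hi.trans_le hs

theorem C_le_of_rePred (hD : OptimalDM D) (henc : IsSelfDelimiting enc) {r : α → BStr → Prop}
    (hr : REPred fun q : α × BStr => r q.1 q.2) :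
    ∃ c : ℕ, ∀ a k x, r a x → {x | r a x}.encard ≤ 2 ^ k → C D x ≤ (enc a).length + k + c := by
  obtain ⟨g, hg, hindex⟩ := exists_partrec_index hr
  have hdecode : Partrec fun q : α × BStr => g q.1 (natOfBits q.2) :=
    hg.comp Computable.fst (primrec_natOfBits.to_comp.comp Computable.snd)
  obtain ⟨c, hc⟩ := C_le_of_partrec hD henc hdecode
  refine ⟨c, fun a k x hx hk => ?_⟩
  obtain ⟨i, hi, hix⟩ := hindex a x hx
  have hC := hc a i.bits x (by rwa [natOfBits_bits])
  have hlength := length_bits_le_of_lt_encard hi hk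
  omega

theorem Ccond_le_of_rePred (hE : OptimalCDM E) (henc : IsSelfDelimiting enc)
    {r : α × BStr → BStr → Prop} (hr : REPred fun q : (α × BStr) × BStr => r q.1 q.2) :
    ∃ c : ℕ, ∀ a k x y, r (a, x) y → {y | r (a, x) y}.encard ≤ 2 ^ k →
      Ccond E y x ≤ (enc a).length + k + c := by
  obtain ⟨g, hg, hindex⟩ := exists_partrec_index hr
  have hdecode : Partrec₂ fun (q : α × BStr) (x : BStr) => g (q.1, x) (natOfBits q.2) :=
    hg.comp ((Computable.fst.comp Computable.fst).pair Computable.snd)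
      (primrec_natOfBits.to_comp.comp (Computable.snd.comp Computable.fst))
  obtain ⟨c, hc⟩ := Ccond_le_of_partrec hE henc hdecode
  refine ⟨c, fun a k x y hy hk => ?_⟩
  obtain ⟨i, hi, hiy⟩ := hindex (a, x) y hy
  have hC := hc a i.bits y x (by rwa [natOfBits_bits])
  have hlength := length_bits_le_of_lt_encard hi hk
  omega

end DescriptionMethods

section Logarithm

theorem size_le_of_le_two_pow_mul_add {a n k c : ℕ} (h : a ≤ 2 ^ k * n + c) :
    a.size ≤ n.size + k + c := by
  rw [Nat.size_le]
  have hn := Nat.lt_size_self n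
  have hc : c < 2 ^ c := Nat.lt_two_pow_self
  calc a ≤ 2 ^ k * n + c := h
    _ < 2 ^ k * (n + 1) * (c + 1) := by
      nlinarith [Nat.one_le_two_pow (n := k), Nat.mul_le_mul_right c (Nat.one_le_two_pow (n := k)),
        Nat.zero_le (2 ^ k * n * c)]
    _ ≤ 2 ^ k * 2 ^ n.size * 2 ^ c := by gcongr <;> omega
    _ = 2 ^ (n.size + k + c) := by ring

theorem mul_size_add_le_mul_logb (a b n : ℕ) :
    (a * n.size + b : ℝ) ≤ (2 * a + b) * Real.logb 2 (n + 2) := by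
  have hone : 1 ≤ Real.logb 2 (n + 2 : ℝ) := by
    rw [Real.le_logb_iff_rpow_le one_lt_two (by positivity), Real.rpow_one]
    linarith [n.cast_nonneg (α := ℝ)]
  have hsize : (n.size : ℝ) ≤ Real.logb 2 (n + 2) + 1 := by
    have hlog : n.size ≤ Nat.log 2 (n + 2) + 1 :=
      Nat.size_le.2 <| (Nat.le_add_right n 2).trans_lt (Nat.lt_pow_succ_log_self one_lt_two _)
    have hlogb := Real.natLog_le_logb (n + 2) 2
    push_cast at hlogb
    have : (n.size : ℝ) ≤ Nat.log 2 (n + 2) + 1 := by exact_mod_cast hlog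
    linarith
  have ha : (a * n.size : ℝ) ≤ a * (2 * Real.logb 2 (n + 2)) := by gcongr; linarith
  have hb : (b : ℝ) ≤ b * Real.logb 2 (n + 2) := le_mul_of_one_le_right b.cast_nonneg hone
  linarith

end Logarithm

section ChainRule

variable {D : BStr →. BStr} {E : BStr → BStr →. BStr} {pair : BStr → BStr → BStr}

theorem C_pair_le (hD : OptimalDM D) (hE : OptimalCDM E) (hpc : Computable₂ pair) :
    ∃ c : ℕ, ∀ x y, C D (pair x y) ≤ C D x + Ccond E y x + 2 * (C D x).size + c := by
  have hrun : Partrec fun q : ℕ × BStr =>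
      (D (q.2.take q.1)).bind fun x => (E (q.2.drop q.1) x).map fun y => pair x y := by
    refine Partrec.bind (hD.1.comp (Primrec.to_comp ?_)) (Partrec.map (hE.1.comp ?_ ?_) ?_)
    · exact Primrec.list_take.comp Primrec.fst Primrec.snd
    · exact (Primrec.list_drop.comp Primrec.fst Primrec.snd).to_comp.comp Computable.fst
    · exact Computable.snd
    · exact hpc.comp (Computable.snd.comp Computable.fst) Computable.snd
  obtain ⟨c, hc⟩ := C_le_of_partrec hD isSelfDelimiting_natCode hrun
  refine ⟨c + 1, fun x y => ?_⟩
  obtain ⟨p, hp, hpx⟩ := exists_program hD x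
  obtain ⟨q, hq, hqy⟩ := exists_program_cond hE y x
  have hle := hc (C D x) (p ++ q) (pair x y) (by
    simp only [← hpx, List.take_left, List.drop_left]
    exact Part.mem_bind hp (Part.mem_map _ hq))
  rw [length_natCode, List.length_append] at hle
  omega

section LargeSections

variable {α : Type*} [Primcodable α] {enc : α → BStr} {r : α → BStr → BStr → Prop}

theorem primrec_two_pow : Primrec fun n : ℕ => 2 ^ n := by
  have hdouble : Primrec₂ fun _ i : ℕ => 2 * i := Primrec.nat_double.comp Primrec.snd
  refine (Primrec.nat_rec₁ 1 hdouble).of_eq fun n => ?_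
  induction n with
  | zero => rfl
  | succ n ih => simp only [pow_succ', ih]

theorem C_le_of_two_pow_le_encard_section (hD : OptimalDM D) (henc : IsSelfDelimiting enc)
    (hr : REPred fun q : (α × BStr) × BStr => r q.1.1 q.1.2 q.2) :
    ∃ c : ℕ, ∀ a m k x, {q : BStr × BStr | r a q.1 q.2}.encard ≤ 2 ^ (m + k) →
      2 ^ m ≤ {y | r a x y}.encard → C D x ≤ (enc a).length + 2 * m.size + k + c := by
  have hquery : Computable fun q : (α × ℕ) × BStr => ((q.1.1, q.2), 2 ^ q.1.2) :=
    ((Computable.fst.comp Computable.fst).pair Computable.snd).pair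
      (primrec_two_pow.to_comp.comp (Computable.snd.comp Computable.fst))
  have hlarge : REPred fun q : (α × ℕ) × BStr =>
      ((2 ^ q.1.2 : ℕ) : ℕ∞) ≤ {y | r q.1.1 q.2 y}.encard :=
    (rePred_comp (rePred_le_encard (r := fun q : α × BStr => r q.1 q.2) hr) hquery).of_eq
      fun _ => Iff.rfl
  obtain ⟨c, hc⟩ := C_le_of_rePred hD (henc.prod isSelfDelimiting_natCode)
    (r := fun q x => ((2 ^ q.2 : ℕ) : ℕ∞) ≤ {y | r q.1 x y}.encard) hlarge
  refine ⟨c + 1, fun a m k x hcard hx => ?_⟩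
  have hmul := (mul_encard_setOf_le_encard_fiber (r a) (2 ^ m)).trans hcard
  have hfew : {x | ((2 ^ m : ℕ) : ℕ∞) ≤ {y | r a x y}.encard}.encard ≤ 2 ^ k := by
    rwa [pow_add, Nat.cast_pow, Nat.cast_ofNat,
      ENat.mul_le_mul_left_iff (by simp) (by simp)] at hmul
  have hC := hc (a, m) k x (by exact_mod_cast hx) hfew
  simp only [List.length_append, length_natCode] at hC
  omega

theorem C_add_Ccond_le_of_rePred (hD : OptimalDM D) (hE : OptimalCDM E)
    (henc : IsSelfDelimiting enc)
    (hr : REPred fun q : (α × BStr) × BStr => r q.1.1 q.1.2 q.2) :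
    ∃ c : ℕ, ∀ a k x y, r a x y → {q : BStr × BStr | r a q.1 q.2}.encard ≤ 2 ^ k →
      C D x + Ccond E y x ≤ k + 2 * (enc a).length + 2 * k.size + c := by
  obtain ⟨c₁, hx⟩ := C_le_of_two_pow_le_encard_section hD henc hr
  obtain ⟨c₂, hy⟩ := Ccond_le_of_rePred hE henc (r := fun q y => r q.1 q.2 y) hr
  refine ⟨c₁ + c₂ + 1, fun a k x y hxy hcard => ?_⟩
  have hsection : {y | r a x y}.encard ≤ 2 ^ k :=
    (Set.encard_le_encard_of_injOn (f := Prod.mk x) (fun y hy => hy)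
      (Prod.mk_right_injective x).injOn).trans hcard
  obtain ⟨s, hs⟩ := ENat.ne_top_iff_exists.1 (ne_top_of_le_ne_top (by simp) hsection)
  have hs0 : s ≠ 0 := by
    rintro rfl
    exact Set.encard_ne_zero_of_mem (a := y) hxy hs.symm
  have hlower : 2 ^ Nat.log 2 s ≤ s := Nat.pow_log_le_self 2 hs0
  have hupper : s < 2 ^ (Nat.log 2 s + 1) := Nat.lt_pow_succ_log_self one_lt_two s
  generalize Nat.log 2 s = m at hlower hupper
  rw [← hs] at hsection
  have hmk : m ≤ k := (Nat.pow_le_pow_iff_right one_lt_two).1 <|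
    hlower.trans (by exact_mod_cast hsection)
  have hCx := hx a m (k - m) x (by rwa [Nat.add_sub_cancel' hmk])
    (by rw [← hs]; exact_mod_cast hlower)
  have hCy := hy a (m + 1) x y hxy (by rw [← hs]; exact_mod_cast hupper.le)
  have hsize := Nat.size_le_size hmk
  omega

end LargeSections

theorem encard_setOf_Cw_pair_le (hpi : Function.Injective fun q : BStr × BStr => pair q.1 q.2)
    (n : ℕ) : {q : BStr × BStr | Cw D (pair q.1 q.2) ≤ n}.encard ≤ 2 ^ (n + 1) := by
  have hmaps : Set.MapsTo (fun q : BStr × BStr => pair q.1 q.2) {q | Cw D (pair q.1 q.2) ≤ n}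
      {x | Cw D x ≤ n} := fun _ h => h
  exact (Set.encard_le_encard_of_injOn hmaps hpi.injOn).trans (encard_setOf_Cw_le D n)

theorem C_add_Ccond_le_C_pair (hD : OptimalDM D) (hE : OptimalCDM E) (hpc : Computable₂ pair)
    (hpi : Function.Injective fun q : BStr × BStr => pair q.1 q.2) :
    ∃ c : ℕ, ∀ x y, C D x + Ccond E y x ≤ C D (pair x y) + 6 * (C D (pair x y)).size + c := by
  have hquery : Computable fun q : (ℕ × BStr) × BStr => (q.1.1, pair q.1.2 q.2) :=
    (Computable.fst.comp Computable.fst).pair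
      (hpc.comp (Computable.snd.comp Computable.fst) Computable.snd)
  have hr : REPred fun q : (ℕ × BStr) × BStr => Cw D (pair q.1.2 q.2) ≤ q.1.1 :=
    (rePred_comp (rePred_Cw_le hD.1) hquery).of_eq fun _ => Iff.rfl
  obtain ⟨c, hc⟩ := C_add_Ccond_le_of_rePred hD hE isSelfDelimiting_natCode
    (r := fun (n : ℕ) x y => Cw D (pair x y) ≤ n) hr
  refine ⟨c + 5, fun x y => ?_⟩
  set n := C D (pair x y)
  have hcard : {q : BStr × BStr | Cw D (pair q.1 q.2) ≤ n}.encard ≤ 2 ^ (n + 1) :=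
    encard_setOf_Cw_pair_le hpi n
  have hle := hc n (n + 1) x y (natCast_C hD _).ge hcard
  have hsize : (n + 1).size ≤ n.size + 1 := by
    rw [Nat.size_le, pow_succ]
    have := Nat.lt_size_self n
    omega
  rw [length_natCode] at hle
  omega

theorem abs_C_add_Ccond_sub_C_pair_le (hD : OptimalDM D) (hE : OptimalCDM E)
    (hpc : Computable₂ pair) (hpi : Function.Injective fun q : BStr × BStr => pair q.1 q.2) :
    ∃ c : ℝ, ∀ x y, |(C D x + Ccond E y x - C D (pair x y) : ℝ)| ≤
      c * Real.logb 2 (C D (pair x y) + 2) := by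
  obtain ⟨c₁, hupper⟩ := C_pair_le hD hE hpc
  obtain ⟨c₂, hlower⟩ := C_add_Ccond_le_C_pair hD hE hpc hpi
  refine ⟨_, fun x y => le_trans ?_ (mul_size_add_le_mul_logb 6 (c₁ + 2 * c₂ + 6) _)⟩
  have hu := hupper x y
  have hl := hlower x y
  set n := C D (pair x y)
  have hn : n.size ≤ n := Nat.size_le.2 Nat.lt_two_pow_self
  have hCx : C D x ≤ 2 ^ 3 * n + c₂ := by omega
  have hsize : (C D x).size ≤ n.size + 3 + c₂ := size_le_of_le_two_pow_mul_add hCx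
  have hu' : n ≤ C D x + Ccond E y x + (6 * n.size + (c₁ + 2 * c₂ + 6)) := by omega
  have hl' : C D x + Ccond E y x ≤ n + (6 * n.size + (c₁ + 2 * c₂ + 6)) := by omega
  rw [abs_sub_le_iff, sub_le_iff_le_add', sub_le_iff_le_add']
  exact_mod_cast And.intro hl' hu'

end ChainRule

/-- Symmetry of algorithmic mutual information `I(x:y) = C(y) − C(y|x)`
with logarithmic precision. -/
theorem stmt10 (D : BStr →. BStr) (hD : OptimalDM D)
    (E : BStr → BStr →. BStr) (hE : OptimalCDM E)
    (pair : BStr → BStr → BStr) (hpc : Computable₂ pair)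
    (hpi : Function.Injective fun q : BStr × BStr => pair q.1 q.2) :
    ∃ c : ℝ, ∀ x y : BStr,
      |((C D y : ℝ) - (Ccond E y x : ℝ)) - ((C D x : ℝ) - (Ccond E x y : ℝ))|
        ≤ c * Real.logb 2 ((C D (pair x y) : ℝ) + 2) := by
  have hpc' : Computable₂ fun x y => pair y x := hpc.comp Computable.snd Computable.fst
  have hpi' : Function.Injective fun q : BStr × BStr => pair q.2 q.1 :=
    hpi.comp Prod.swap_injective
  obtain ⟨c₁, h₁⟩ := abs_C_add_Ccond_sub_C_pair_le hD hE hpc hpi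
  obtain ⟨c₂, h₂⟩ := abs_C_add_Ccond_sub_C_pair_le hD hE hpc' hpi'
  refine ⟨c₁ + c₂, fun x y => ?_⟩
  calc |((C D y : ℝ) - Ccond E y x) - (C D x - Ccond E x y)|
      = |(C D y + Ccond E x y - C D (pair x y) : ℝ) -
          (C D x + Ccond E y x - C D (pair x y))| := by congr 1; ring
    _ ≤ |(C D y + Ccond E x y - C D (pair x y) : ℝ)| +
          |(C D x + Ccond E y x - C D (pair x y) : ℝ)| := abs_sub _ _
    _ ≤ c₂ * Real.logb 2 (C D (pair x y) + 2) + c₁ * Real.logb 2 (C D (pair x y) + 2) :=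
      add_le_add (h₂ y x) (h₁ x y)
    _ = (c₁ + c₂) * Real.logb 2 (C D (pair x y) + 2) := by ring
end

section
/- There exists an infinite binary sequence ω that is Mises–Church random with parameter 1/2 and a constant c such that the complexity of every prefix satisfies C(ω₁ω₂…ω_n) ≤ c·log(n+2) for all n ≥ 1. (Kolmogorov's theorem separating the Mises–Church definition of a Bernoulli sequence from complexity-based randomness.) -/
open scoped Classical

/-- The prefix `ω₁…ω_n` of an infinite binary sequence. -/
def pref (ω : ℕ → Bool) (n : ℕ) : BStr := (List.range n).map ω

/-- Mises–Church randomness with parameter `1/2`: every total computable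
selection rule that selects infinitely many terms of `ω` yields a selected
subsequence in which the limiting frequency of ones equals `1/2`. -/
def MisesChurchRandom (ω : ℕ → Bool) : Prop :=
  ∀ r : BStr → Bool, Computable r →
    {n : ℕ | r (pref ω n) = true}.Infinite →
    Filter.Tendsto
      (fun m : ℕ =>
        (((Finset.range m).filter
            (fun k => ω (Nat.nth (fun n => r (pref ω n) = true) k) = true)).card : ℝ)
          / (m : ℝ))
      Filter.atTop (nhds (1 / 2 : ℝ))

/-!
Assign to every time `n` a node of the infinite binary tree: descend from the root, turning at
depth `i` according to the decision of the `i`-th selection rule on the prefix produced so far, to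
the first node that is not full, where a node of depth `d` is full after `2 ^ d` visits. Let the
bits produced at the visits to each single node alternate. Beyond depth `i`, the visits to a node
are either all selected by the `i`-th rule or all rejected, so each such node contributes at most
`1` to the imbalance between selected ones and zeros. A node of depth greater than `K > i` is
reached only after its parent has absorbed at least `2 ^ K` visits with the same decision of the
`i`-th rule, so the number of these nodes with selected visits is at most `2 / 2 ^ K` times the
number of selected terms, while only finitely many visits go to the shallower nodes.

The rules are the total computable ones; a bit table saying which of the first `O(log n)` codes are
total, together with `n` itself, suffices to compute the first `n` terms.
-/

open Finset
open Nat.Partrec (Code)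

namespace Kolmogorov

section Discrepancy

/-- The number of ones minus the number of zeros of `ω` at the positions in `s`. -/
def discrepancy (ω : ℕ → Bool) (s : Finset ℕ) : ℤ :=
  ∑ k ∈ s, bif ω k then 1 else -1

theorem discrepancy_eq_two_mul_card_sub (ω : ℕ → Bool) (s : Finset ℕ) :
    discrepancy ω s = 2 * #{k ∈ s | ω k = true} - #s := by
  have h : ∀ k, (bif ω k then 1 else -1) = 2 * (if ω k = true then 1 else 0 : ℤ) - 1 := fun k => by
    cases ω k <;> rfl
  simp only [discrepancy, h, sum_sub_distrib, ← mul_sum, sum_boole, sum_const, nsmul_one]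

theorem abs_discrepancy_le_card (ω : ℕ → Bool) (s : Finset ℕ) : |discrepancy ω s| ≤ #s := by
  have h : #{k ∈ s | ω k = true} ≤ #s := card_filter_le _ _
  rw [discrepancy_eq_two_mul_card_sub, abs_le]
  constructor <;> omega

theorem discrepancy_filter_add_discrepancy_filter_not (ω : ℕ → Bool) (s : Finset ℕ) (p : ℕ → Prop)
    [DecidablePred p] :
    discrepancy ω {k ∈ s | p k} + discrepancy ω {k ∈ s | ¬p k} = discrepancy ω s :=
  sum_filter_add_sum_filter_not s p _

/-- The terms of `ω` at the positions with any given label read `1, 0, 1, 0, …`. -/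
def IsAlternating {α : Type*} [DecidableEq α] (ℓ : ℕ → α) (ω : ℕ → Bool) : Prop :=
  ∀ n, ω n = decide (Even (Nat.count (ℓ · = ℓ n) n))

variable {α : Type*} [DecidableEq α] {ℓ : ℕ → α} {ω : ℕ → Bool}

theorem IsAlternating.discrepancy_fiber (h : IsAlternating ℓ ω) (a : α) (n : ℕ) :
    discrepancy ω {k ∈ range n | ℓ k = a} = (Nat.count (ℓ · = a) n % 2 : ℕ) := by
  induction n with
  | zero => rfl
  | succ n ih =>
    rw [range_add_one, filter_insert, Nat.count_succ]
    split_ifs with hn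
    · have hω : ω n = decide (Even (Nat.count (ℓ · = a) n)) := hn ▸ h n
      rw [discrepancy, sum_insert (by simp), ← discrepancy, ih, hω]
      rcases Nat.mod_two_eq_zero_or_one (Nat.count (ℓ · = a) n) with hmod | hmod <;>
        simp [Nat.even_iff, Nat.add_mod, hmod]
    · rw [ih, add_zero]

theorem IsAlternating.abs_discrepancy_le_card_image (h : IsAlternating ℓ ω) {n : ℕ}
    {s : Finset ℕ} (hs : ∀ k ∈ s, {j ∈ s | ℓ j = ℓ k} = {j ∈ range n | ℓ j = ℓ k}) :
    |discrepancy ω s| ≤ #(s.image ℓ) := by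
  have hfiber : ∀ a ∈ s.image ℓ, |discrepancy ω {j ∈ s | ℓ j = a}| ≤ 1 := by
    refine forall_mem_image.2 fun k hk => ?_
    rw [hs k hk, h.discrepancy_fiber, Nat.abs_cast]
    omega
  calc |discrepancy ω s|
      = |∑ a ∈ s.image ℓ, discrepancy ω {j ∈ s | ℓ j = a}| := by
        rw [discrepancy, ← sum_fiberwise_of_maps_to fun k => mem_image_of_mem ℓ]; rfl
    _ ≤ ∑ a ∈ s.image ℓ, |discrepancy ω {j ∈ s | ℓ j = a}| := abs_sum_le_sum_abs _ _
    _ ≤ #(s.image ℓ) := by simpa using sum_le_sum hfiber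

end Discrepancy

section Frequency

theorem card_filter_nth_eq_card_filter_range_nth {p : ℕ → Prop} [DecidablePred p]
    (hp : (Set.ofPred p).Infinite) (q : ℕ → Prop) [DecidablePred q] (m : ℕ) :
    #{k ∈ range m | q (Nat.nth p k)} = #{j ∈ {j ∈ range (Nat.nth p m) | p j} | q j} := by
  refine card_nbij (Nat.nth p) (fun k hk => ?_) (Nat.nth_injective hp).injOn fun j hj => ?_
  · simp only [coe_filter, mem_filter, mem_range, Set.mem_ofPred_eq] at hk ⊢
    exact ⟨⟨(Nat.nth_lt_nth hp).2 hk.1, Nat.nth_mem_of_infinite hp k⟩, hk.2⟩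
  · simp only [coe_filter, mem_filter, mem_range, Set.mem_ofPred_eq] at hj
    have hnth : Nat.nth p (Nat.count p j) = j := Nat.nth_count hj.1.2
    refine ⟨Nat.count p j, ?_, hnth⟩
    simp only [coe_filter, mem_range, Set.mem_ofPred_eq, hnth]
    exact ⟨(Nat.nth_lt_nth hp).1 (hnth.trans_lt hj.1.1), hj.2⟩

theorem tendsto_frequency_of_discrepancy {ω : ℕ → Bool} {p : ℕ → Prop} [DecidablePred p]
    (hp : (Set.ofPred p).Infinite)
    (h : ∀ ε > (0 : ℝ), ∃ M : ℝ, ∀ n,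
      |(discrepancy ω {k ∈ range n | p k} : ℝ)| ≤ M + ε * #{k ∈ range n | p k}) :
    Filter.Tendsto (fun m : ℕ => (#{k ∈ range m | ω (Nat.nth p k) = true} : ℝ) / m)
      Filter.atTop (nhds (1 / 2)) := by
  rw [Metric.tendsto_atTop]
  intro ε hε
  obtain ⟨M, hM⟩ := h ε hε
  obtain ⟨N, hN⟩ := exists_nat_gt (M / ε)
  refine ⟨N + 1, fun m hm => ?_⟩
  set A : ℕ := #{k ∈ range m | ω (Nat.nth p k) = true}
  have hcard : #{k ∈ range (Nat.nth p m) | p k} = m := by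
    rw [← Nat.count_eq_card_filter_range, Nat.count_nth_of_infinite hp]
  have hdisc : (discrepancy ω {k ∈ range (Nat.nth p m) | p k} : ℝ) = 2 * A - m := by
    rw [discrepancy_eq_two_mul_card_sub, hcard,
      ← card_filter_nth_eq_card_filter_range_nth hp (ω · = true)]
    push_cast
    rfl
  have hm0 : (0 : ℝ) < m := by exact_mod_cast (by omega : 0 < m)
  have hMm : M < m * ε := by
    refine (div_lt_iff₀ hε).1 (hN.trans_le ?_)
    exact_mod_cast (by omega : N ≤ m)
  have hbound : |2 * (A : ℝ) - m| ≤ M + ε * m := by simpa only [hdisc, hcard] using hM (Nat.nth p m)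
  have hdist : (A : ℝ) / m - 1 / 2 = (2 * A - m) / (2 * m) := by field_simp
  rw [Real.dist_eq, hdist, abs_div, abs_of_pos (by positivity : (0 : ℝ) < 2 * m),
    div_lt_iff₀ (by positivity)]
  linarith

end Frequency

section Descent

/-- Nodes of the infinite binary tree are binary strings, and a node of depth `d` has capacity
`2 ^ d`. At time `n` we descend from the root along the branch `a 0 n, a 1 n, …` to the first node
that is not yet full; `ℓ n` is that node, and time `n` counts as a visit to it. -/
structure IsDescent (a : ℕ → ℕ → Bool) (ℓ : ℕ → BStr) : Prop where
  getElem_eq : ∀ n i (hi : i < (ℓ n).length), (ℓ n)[i] = a i n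
  le_count_take : ∀ n, ∀ i < (ℓ n).length, 2 ^ i ≤ Nat.count (ℓ · = (ℓ n).take i) n
  count_lt : ∀ n, Nat.count (ℓ · = ℓ n) n < 2 ^ (ℓ n).length

theorem card_le_two_mul_card_image_dropLast {s : Finset BStr} (hs : [] ∉ s) :
    #s ≤ 2 * #(s.image List.dropLast) := by
  refine card_le_mul_card_image s 2 fun q _ => ?_
  refine (card_le_card (t := {q ++ [false], q ++ [true]}) fun u hu => ?_).trans card_le_two
  obtain ⟨hus, rfl⟩ := mem_filter.1 hu
  have hne : u ≠ [] := fun h => hs (h ▸ hus)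
  have hlast := List.dropLast_append_getLast hne
  cases hb : u.getLast hne <;> rw [hb] at hlast <;> simp [hlast]

namespace IsDescent

variable {a : ℕ → ℕ → Bool} {ℓ : ℕ → BStr}

theorem finite_fiber (h : IsDescent a ℓ) (u : BStr) : {n | ℓ n = u}.Finite := by
  by_contra hinf
  set n := Nat.nth (ℓ · = u) (2 ^ u.length)
  have hn : ℓ n = u := Nat.nth_mem_of_infinite hinf _
  have hlt := h.count_lt n
  rw [hn, Nat.count_nth_of_infinite hinf] at hlt
  exact hlt.false

theorem finite_length_le (h : IsDescent a ℓ) (K : ℕ) : {n | (ℓ n).length ≤ K}.Finite :=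
  (List.finite_length_le Bool K).preimage' fun u _ => h.finite_fiber u

theorem eq_of_label_eq (h : IsDescent a ℓ) {i j k : ℕ} (hi : i < (ℓ k).length)
    (hjk : ℓ j = ℓ k) : a i j = a i k := by
  rw [← h.getElem_eq k i hi, ← h.getElem_eq j i (hjk ▸ hi)]
  simp only [hjk]

theorem two_pow_le_card_parent (h : IsDescent a ℓ) {i k n : ℕ} (hkn : k < n)
    (hi : i + 1 < (ℓ k).length) :
    2 ^ ((ℓ k).length - 1) ≤ #{j ∈ {j ∈ range n | a i j = a i k} | ℓ j = (ℓ k).dropLast} := by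
  refine (h.le_count_take k _ (Nat.sub_one_lt (by omega))).trans ?_
  rw [← List.dropLast_eq_take, Nat.count_eq_card_filter_range]
  refine card_le_card fun j hj => ?_
  obtain ⟨hjk, hlabel⟩ : j < k ∧ ℓ j = (ℓ k).dropLast := by simpa using hj
  have ha : a i j = a i k := by
    have hij : i < (ℓ j).length := by
      rw [hlabel, List.length_dropLast]
      omega
    rw [← h.getElem_eq k i (by omega), ← h.getElem_eq j i hij]
    simp only [hlabel, List.getElem_dropLast]
  simpa [ha, hlabel] using hjk.trans hkn

theorem two_pow_mul_card_image_dropLast_le (h : IsDescent a ℓ) {i K : ℕ} (hiK : i < K) (n : ℕ) :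
    2 ^ K * #(({k ∈ {k ∈ range n | a i k = true} | K < (ℓ k).length}.image ℓ).image List.dropLast) ≤
      #{k ∈ range n | a i k = true} := by
  set P := {k ∈ range n | a i k = true}
  set Q := ({k ∈ P | K < (ℓ k).length}.image ℓ).image List.dropLast
  refine (mul_card_image_le_card_of_maps_to (s := {k ∈ P | ℓ k ∈ Q}) (t := Q) (f := ℓ)
    (fun k hk => (mem_filter.1 hk).2) (2 ^ K) fun q hq => ?_).trans (card_filter_le _ _)
  obtain ⟨k, ⟨⟨hkn, hak⟩, hK⟩, hkq⟩ :
      ∃ k, ((k < n ∧ a i k = true) ∧ K < (ℓ k).length) ∧ (ℓ k).dropLast = q := by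
    simpa [Q, P] using hq
  calc 2 ^ K
      ≤ 2 ^ ((ℓ k).length - 1) := Nat.pow_le_pow_right two_pos (by omega)
    _ ≤ #{j ∈ P | ℓ j = q} := by
      simpa only [hkq, hak] using h.two_pow_le_card_parent hkn (i := i) (by omega)
    _ ≤ #{j ∈ {j ∈ P | ℓ j ∈ Q} | ℓ j = q} := card_le_card fun j hj => by
      obtain ⟨hjP, hjq⟩ := mem_filter.1 hj
      exact mem_filter.2 ⟨mem_filter.2 ⟨hjP, hjq ▸ hq⟩, hjq⟩

theorem two_pow_mul_card_image_le (h : IsDescent a ℓ) {i K : ℕ} (hiK : i < K) (n : ℕ) :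
    2 ^ K * #({k ∈ {k ∈ range n | a i k = true} | K < (ℓ k).length}.image ℓ) ≤
      2 * #{k ∈ range n | a i k = true} := by
  set U := {k ∈ {k ∈ range n | a i k = true} | K < (ℓ k).length}.image ℓ
  have hne : [] ∉ U := fun hmem => by
    obtain ⟨k, hk, hnil⟩ := mem_image.1 hmem
    simpa [hnil] using (mem_filter.1 hk).2
  calc 2 ^ K * #U
      ≤ 2 ^ K * (2 * #(U.image List.dropLast)) := by
        gcongr
        exact card_le_two_mul_card_image_dropLast hne
    _ = 2 * (2 ^ K * #(U.image List.dropLast)) := by ring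
    _ ≤ 2 * #{k ∈ range n | a i k = true} := by
        gcongr
        exact h.two_pow_mul_card_image_dropLast_le hiK n

theorem abs_discrepancy_deep_le (h : IsDescent a ℓ) {ω : ℕ → Bool} (hω : IsAlternating ℓ ω)
    {i K : ℕ} (hiK : i < K) (n : ℕ) :
    |discrepancy ω {k ∈ {k ∈ range n | a i k = true} | K < (ℓ k).length}| ≤
      #({k ∈ {k ∈ range n | a i k = true} | K < (ℓ k).length}.image ℓ) := by
  refine hω.abs_discrepancy_le_card_image (n := n) fun k hk => ?_
  obtain ⟨⟨-, hak⟩, hK⟩ : (k < n ∧ a i k = true) ∧ K < (ℓ k).length := by simpa using hk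
  ext j
  simp only [mem_filter, and_assoc]
  refine and_congr_right fun _ => ⟨fun hj => hj.2.2, fun hj => ⟨?_, hj ▸ hK, hj⟩⟩
  rw [h.eq_of_label_eq (hiK.trans hK) hj, hak]

theorem exists_two_pow_mul_abs_discrepancy_le (h : IsDescent a ℓ) {ω : ℕ → Bool}
    (hω : IsAlternating ℓ ω) {i K : ℕ} (hiK : i < K) :
    ∃ M : ℕ, ∀ n, 2 ^ K * |discrepancy ω {k ∈ range n | a i k = true}| ≤
      M + 2 * #{k ∈ range n | a i k = true} := by
  set M := #(h.finite_length_le K).toFinset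
  refine ⟨2 ^ K * M, fun n => ?_⟩
  set P := {k ∈ range n | a i k = true}
  have hshallow : |discrepancy ω {k ∈ P | ¬K < (ℓ k).length}| ≤ M := by
    refine (abs_discrepancy_le_card _ _).trans (Nat.cast_le.2 (card_le_card fun k hk => ?_))
    simpa using (mem_filter.1 hk).2
  have hlabels : (2 ^ K * #({k ∈ P | K < (ℓ k).length}.image ℓ) : ℤ) ≤ 2 * #P := by
    exact_mod_cast h.two_pow_mul_card_image_le hiK n
  calc 2 ^ K * |discrepancy ω P|
      ≤ 2 ^ K * (#({k ∈ P | K < (ℓ k).length}.image ℓ) + M : ℤ) := by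
        rw [← discrepancy_filter_add_discrepancy_filter_not ω P fun k => K < (ℓ k).length]
        gcongr
        exact (abs_add_le _ _).trans (add_le_add (h.abs_discrepancy_deep_le hω hiK n) hshallow)
    _ = 2 ^ K * #({k ∈ P | K < (ℓ k).length}.image ℓ) + 2 ^ K * M := by ring
    _ ≤ (2 ^ K * M : ℕ) + 2 * #P := by
        push_cast
        linarith

end IsDescent

theorem misesChurchRandom_of_isDescent {ρ : ℕ → BStr → Bool} {ω : ℕ → Bool} {ℓ : ℕ → BStr}
    (hρ : ∀ r : BStr → Bool, Computable r → ∃ i, ρ i = r)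
    (hℓ : IsDescent (fun i n => ρ i (pref ω n)) ℓ) (hω : IsAlternating ℓ ω) :
    MisesChurchRandom ω := by
  intro r hr hinf
  obtain ⟨i, rfl⟩ := hρ r hr
  refine tendsto_frequency_of_discrepancy hinf fun ε hε => ?_
  obtain ⟨K, hK⟩ := exists_nat_gt (max (i : ℝ) (2 / ε))
  obtain ⟨hiK, hεK⟩ := max_lt_iff.1 hK
  obtain ⟨M, hM⟩ := hℓ.exists_two_pow_mul_abs_discrepancy_le hω (Nat.cast_lt.1 hiK)
  refine ⟨M, fun n => ?_⟩
  set P := {k ∈ range n | ρ i (pref ω k) = true}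
  have hMn : 2 ^ K * |(discrepancy ω P : ℝ)| ≤ M + 2 * #P := by exact_mod_cast hM n
  have hpow : 2 ≤ 2 ^ K * ε := by
    refine (div_le_iff₀ hε).1 (hεK.le.trans ?_)
    exact_mod_cast Nat.lt_two_pow_self.le
  refine le_of_mul_le_mul_left (hMn.trans ?_) (by positivity : (0 : ℝ) < 2 ^ K)
  calc (M + 2 * #P : ℝ)
      ≤ 2 ^ K * M + 2 ^ K * ε * #P := by
        gcongr
        exact le_mul_of_one_le_left M.cast_nonneg (one_le_pow₀ one_le_two)
    _ = 2 ^ K * (M + ε * #P) := by ring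

end Descent

section Construction

/-- The stage reached by the construction: the nodes visited so far, latest first, and the bits
produced so far, earliest first. -/
abbrev Stage := List BStr × BStr

/-- The first node on the branch `v` that is not full after the visits `H`, or `v` itself if every
proper prefix of `v` is full. -/
def firstNonFull (H : List BStr) (v : BStr) : BStr :=
  v.take ((List.range v.length).findIdx fun i => decide (H.count (v.take i) < 2 ^ i))

theorem length_firstNonFull (H : List BStr) (v : BStr) : (firstNonFull H v).length =
    (List.range v.length).findIdx fun i => decide (H.count (v.take i) < 2 ^ i) :=
  List.length_take_of_le (List.findIdx_le_length.trans_eq List.length_range)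

theorem firstNonFull_prefix (H : List BStr) (v : BStr) : firstNonFull H v <+: v :=
  List.take_prefix _ _

theorem take_firstNonFull (H : List BStr) (v : BStr) {i : ℕ} (hi : i ≤ (firstNonFull H v).length) :
    (firstNonFull H v).take i = v.take i := by
  rw [length_firstNonFull] at hi
  rw [firstNonFull, List.take_take, min_eq_left hi]

theorem two_pow_le_count_take_firstNonFull (H : List BStr) (v : BStr) {i : ℕ}
    (hi : i < (firstNonFull H v).length) : 2 ^ i ≤ H.count ((firstNonFull H v).take i) := by
  rw [take_firstNonFull H v hi.le]
  rw [length_firstNonFull] at hi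
  simpa using List.not_of_lt_findIdx hi

theorem count_firstNonFull_lt {H : List BStr} {v : BStr} (hH : H.length < 2 ^ v.length) :
    H.count (firstNonFull H v) < 2 ^ (firstNonFull H v).length := by
  have hle := (firstNonFull_prefix H v).length_le
  rcases hle.eq_or_lt with h | h
  · rw [h]
    exact List.count_le_length.trans_lt hH
  · rw [← (firstNonFull H v).take_length, take_firstNonFull H v le_rfl, List.length_take_of_le hle]
    rw [length_firstNonFull] at h ⊢
    have hidx := List.findIdx_getElem (w := h.trans_eq List.length_range.symm)
    simpa using hidx

/-- Visit the first non-full node on the branch `v`, and produce the bit that makes the bits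
produced at this node alternate. -/
def extend (s : Stage) (v : BStr) : Stage :=
  (firstNonFull s.1 v :: s.1, s.2 ++ [decide (Even (s.1.count (firstNonFull s.1 v)))])

/-- The decisions of the first `k` rules on `x`. -/
def branch (ρ : ℕ → BStr → Bool) (x : BStr) (k : ℕ) : BStr :=
  (List.range k).map (ρ · x)

/-- The first `n` steps of the construction against the rules `ρ`. Since there are fewer than
`2 ^ n.size` earlier visits, `n.size` rules suffice to reach a non-full node at time `n`. -/
def run (ρ : ℕ → BStr → Bool) : ℕ → Stage
  | 0 => ([], [])
  | n + 1 => extend (run ρ n) (branch ρ (run ρ n).2 n.size)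

/-- The node visited at time `n`. -/
def visit (ρ : ℕ → BStr → Bool) (n : ℕ) : BStr :=
  firstNonFull (run ρ n).1 (branch ρ (run ρ n).2 n.size)

/-- The sequence produced by the construction. -/
def runSeq (ρ : ℕ → BStr → Bool) (n : ℕ) : Bool :=
  decide (Even ((run ρ n).1.count (visit ρ n)))

variable (ρ : ℕ → BStr → Bool) (n : ℕ)

theorem length_run_fst : (run ρ n).1.length = n := by
  induction n with
  | zero => rfl
  | succ n ih => rw [run, extend, List.length_cons, ih]

theorem count_run_fst (u : BStr) : (run ρ n).1.count u = Nat.count (visit ρ · = u) n := by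
  induction n with
  | zero => rfl
  | succ n ih =>
    rw [Nat.count_succ, ← ih, run, extend, List.count_cons, ← visit]
    simp only [beq_iff_eq]

theorem run_snd : (run ρ n).2 = pref (runSeq ρ) n := by
  induction n with
  | zero => rfl
  | succ n ih =>
    rw [pref, List.range_succ, List.map_append, ← pref, ← ih]
    rfl

theorem isAlternating_runSeq : IsAlternating (visit ρ) (runSeq ρ) := fun n => by
  rw [runSeq, count_run_fst]

theorem isDescent_visit : IsDescent (fun i n => ρ i (pref (runSeq ρ) n)) (visit ρ) where
  getElem_eq n i hi := by
    refine ((firstNonFull_prefix _ _).getElem hi).trans ?_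
    simp only [branch, List.getElem_map, List.getElem_range, run_snd]
  le_count_take n i hi := by
    rw [← count_run_fst]
    exact two_pow_le_count_take_firstNonFull _ _ hi
  count_lt n := by
    rw [← count_run_fst]
    refine count_firstNonFull_lt ?_
    rw [length_run_fst, branch, List.length_map, List.length_range]
    exact n.lt_size_self

end Construction

section PartialRules

/-- `branch` for rules that may fail to terminate. -/
def branchPart (σ : ℕ → BStr →. Bool) (x : BStr) : ℕ → Part BStr
  | 0 => Part.some []
  | k + 1 => (branchPart σ x k).bind fun v => (σ k x).map fun b => v ++ [b]

/-- `run` for rules that may fail to terminate. -/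
def runPart (σ : ℕ → BStr →. Bool) : ℕ → Part Stage
  | 0 => Part.some ([], [])
  | n + 1 => (runPart σ n).bind fun s => (branchPart σ s.2 n.size).map (extend s)

variable {σ : ℕ → BStr →. Bool} {ρ : ℕ → BStr → Bool}

theorem branchPart_eq_some {k : ℕ} (x : BStr) (h : ∀ i < k, σ i x = Part.some (ρ i x)) :
    branchPart σ x k = Part.some (branch ρ x k) := by
  induction k with
  | zero => rfl
  | succ k ih =>
    rw [branchPart, ih fun i hi => h i (hi.trans k.lt_succ_self), Part.bind_some,
      h k k.lt_succ_self, Part.map_some, branch, branch, List.range_succ, List.map_append]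
    rfl

theorem runPart_eq_some {n : ℕ} (h : ∀ i < n.size, ∀ x, σ i x = Part.some (ρ i x)) :
    runPart σ n = Part.some (run ρ n) := by
  induction n with
  | zero => rfl
  | succ n ih =>
    have h' : ∀ i < n.size, ∀ x, σ i x = Part.some (ρ i x) :=
      fun i hi => h i (hi.trans_le (Nat.size_le_size n.le_succ))
    rw [runPart, ih h', Part.bind_some, branchPart_eq_some _ fun i hi => h' i hi _, Part.map_some,
      run]

end PartialRules

section Computability

theorem primrec_two_pow : Primrec fun n : ℕ => 2 ^ n :=
  (Primrec₂.unpaired'.1 Nat.Primrec.pow).comp (Primrec.const 2) Primrec.id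

theorem primrec_list_count {α : Type*} [Primcodable α] [BEq α] [LawfulBEq α] :
    Primrec₂ fun (l : List α) (a : α) => l.count a :=
  (Primrec.list_length.comp₂ (PrimrecRel.listFilter Primrec.eq)).of_eq fun l a => by
    simp only [List.count_eq_length_filter, beq_eq_decide]

theorem primrec_natSize : Primrec Nat.size := by
  have hlt : Primrec₂ fun n k : ℕ => decide (n < 2 ^ k) :=
    (Primrec.nat_lt.comp Primrec.fst (primrec_two_pow.comp Primrec.snd)).decide
  refine (Primrec.list_findIdx (Primrec.list_range.comp Primrec.succ) hlt).of_eq fun n => ?_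
  have hsize : n.size < (List.range n.succ).length := by
    rw [List.length_range, Nat.lt_succ_iff, Nat.size_le]
    exact n.lt_two_pow_self
  refine (List.findIdx_eq hsize).2 ⟨?_, fun j hj => ?_⟩
  · simpa using n.lt_size_self
  · simpa using Nat.lt_size.1 hj

theorem primrec_firstNonFull : Primrec₂ firstNonFull := by
  have hcount : Primrec₂ fun (p : List BStr × BStr) (i : ℕ) => p.1.count (p.2.take i) :=
    primrec_list_count.comp₂ (Primrec.fst.comp Primrec.fst)
      (Primrec.list_take.comp Primrec.snd (Primrec.snd.comp Primrec.fst))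
  have hlt : Primrec₂ fun (p : List BStr × BStr) (i : ℕ) =>
      decide (p.1.count (p.2.take i) < 2 ^ i) :=
    (Primrec.nat_lt.comp hcount (primrec_two_pow.comp Primrec.snd)).decide
  exact Primrec.list_take.comp (Primrec.list_findIdx
    (Primrec.list_range.comp (Primrec.list_length.comp Primrec.snd)) hlt) Primrec.snd

theorem primrec_even : PrimrecPred fun n : ℕ => Even n :=
  (Primrec.eq.comp (Primrec.nat_mod.comp Primrec.id (Primrec.const 2)) (Primrec.const 0)).of_eq
    fun _ => Nat.even_iff.symm

theorem primrec_extend : Primrec₂ extend := by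
  have hnode : Primrec fun p : Stage × BStr => firstNonFull p.1.1 p.2 :=
    primrec_firstNonFull.comp (Primrec.fst.comp Primrec.fst) Primrec.snd
  have hcount : Primrec fun p : Stage × BStr => p.1.1.count (firstNonFull p.1.1 p.2) :=
    primrec_list_count.comp (Primrec.fst.comp Primrec.fst) hnode
  exact (Primrec.list_cons.comp hnode (Primrec.fst.comp Primrec.fst)).pair
    (Primrec.list_concat.comp (Primrec.snd.comp Primrec.fst) (primrec_even.comp hcount).decide)

variable {α : Type*} [Primcodable α] {σ : α → ℕ → BStr →. Bool}

theorem partrec_branchPart (hσ : Partrec fun p : α × ℕ × BStr => σ p.1 p.2.1 p.2.2) :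
    Partrec fun p : (α × BStr) × ℕ => branchPart (σ p.1.1) p.1.2 p.2 := by
  have hstep : Partrec₂ fun (p : (α × BStr) × ℕ) (q : ℕ × BStr) =>
      (σ p.1.1 q.1 p.1.2).map fun b => q.2 ++ [b] := by
    refine Partrec.map ?_ (Computable.list_concat.comp (Computable.snd.comp
      (Computable.snd.comp Computable.fst)) Computable.snd)
    exact hσ.comp ((Computable.fst.comp (Computable.fst.comp Computable.fst)).pair
      ((Computable.fst.comp Computable.snd).pair
        (Computable.snd.comp (Computable.fst.comp Computable.fst))))
  refine (Partrec.nat_rec Computable.snd (Computable.const ([] : BStr)) hstep).of_eq ?_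
  rintro ⟨p, k⟩
  induction k with
  | zero => rfl
  | succ k ih => exact congrArg (Part.bind · _) ih

theorem partrec_runPart (hσ : Partrec fun p : α × ℕ × BStr => σ p.1 p.2.1 p.2.2) :
    Partrec fun p : α × ℕ => runPart (σ p.1) p.2 := by
  have hstep : Partrec₂ fun (p : α × ℕ) (q : ℕ × Stage) =>
      (branchPart (σ p.1) q.2.2 q.1.size).map (extend q.2) := by
    refine Partrec.map ?_ (primrec_extend.to_comp.comp (Computable.snd.comp
      (Computable.snd.comp Computable.fst)) Computable.snd)
    exact (partrec_branchPart hσ).comp (((Computable.fst.comp Computable.fst).pair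
      (Computable.snd.comp (Computable.snd.comp Computable.snd))).pair
        (primrec_natSize.to_comp.comp (Computable.fst.comp Computable.snd)))
  refine (Partrec.nat_rec Computable.snd (Computable.const (([], []) : Stage)) hstep).of_eq ?_
  rintro ⟨p, n⟩
  induction n with
  | zero => rfl
  | succ n ih => exact congrArg (Part.bind · _) ih

end Computability

section Rules

/-- Whether the code with index `i` computes a function that is total on (encoded) strings. -/
noncomputable def isTotalIndex (i : ℕ) : Bool :=
  decide (∀ x : BStr, (Code.eval (Denumerable.ofNat Code i) (Encodable.encode x)).Dom)

/-- The partial selection rule computed by the code with index `i`, provided that `b` is `true`;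
otherwise the rule that selects nothing. -/
def guardedRule (b : Bool) (i : ℕ) : BStr →. Bool := fun x =>
  bif b then
    (Code.eval (Denumerable.ofNat Code i) (Encodable.encode x)).map
      fun y => decide (y = Encodable.encode true)
  else Part.some false

theorem guardedRule_isTotalIndex_dom (i : ℕ) (x : BStr) :
    (guardedRule (isTotalIndex i) i x).Dom := by
  cases h : isTotalIndex i
  · trivial
  · exact of_decide_eq_true h x

/-- An enumeration of selection rules containing all computable ones: codes that are not total are
replaced by the rule that selects nothing. -/
noncomputable def totalRule (i : ℕ) (x : BStr) : Bool :=
  (guardedRule (isTotalIndex i) i x).get (guardedRule_isTotalIndex_dom i x)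

theorem guardedRule_isTotalIndex (i : ℕ) (x : BStr) :
    guardedRule (isTotalIndex i) i x = Part.some (totalRule i x) :=
  (Part.some_get _).symm

theorem exists_totalRule_eq {r : BStr → Bool} (hr : Computable r) : ∃ i, totalRule i = r := by
  obtain ⟨c, hc⟩ := Code.exists_code.1 hr
  have heval : ∀ x : BStr, Code.eval (Denumerable.ofNat Code (Encodable.encode c))
      (Encodable.encode x) = Part.some (Encodable.encode (r x)) := fun x => by
    rw [Denumerable.ofNat_encode, hc]
    simp
  have htotal : isTotalIndex (Encodable.encode c) = true :=
    decide_eq_true fun x => by rw [heval]; trivial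
  refine ⟨Encodable.encode c, funext fun x => Part.some_injective ?_⟩
  simp only [← guardedRule_isTotalIndex, htotal, guardedRule, cond_true, heval, Part.map_some,
    Encodable.encode_inj, Bool.decide_eq_true]

theorem partrec_guardedRule :
    Partrec fun p : BStr × ℕ × BStr => guardedRule (p.1.getD p.2.1 false) p.2.1 p.2.2 := by
  refine Partrec.cond ?_ ?_ (Computable.const false)
  · exact ((Primrec.list_getD false).comp Primrec.fst (Primrec.fst.comp Primrec.snd)).to_comp
  · refine Partrec.map ?_ (Primrec.eq.comp Primrec.snd (Primrec.const _)).decide.to_comp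
    exact Code.eval_part.comp
      ((Computable.ofNat Code).comp (Computable.fst.comp Computable.snd))
      (Computable.encode.comp (Computable.snd.comp Computable.snd))

end Rules

section Complexity

/-- The number whose binary digits are `l`, least significant first. -/
def ofBits (l : BStr) : ℕ := l.foldr Nat.bit 0

theorem ofBits_bits (n : ℕ) : ofBits n.bits = n := by
  induction n using Nat.binaryRec' with
  | zero => rfl
  | bit b n h ih => rw [Nat.bits_append_bit n b h, ofBits, List.foldr_cons, ← ofBits, ih]

theorem primrec_ofBits : Primrec ofBits := by
  have hbit : Primrec₂ fun (_ : BStr) (q : Bool × ℕ) => Nat.bit q.1 q.2 :=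
    (Primrec.cond (Primrec.fst.comp Primrec.snd)
      (Primrec.nat_double_succ.comp (Primrec.snd.comp Primrec.snd))
      (Primrec.nat_double.comp (Primrec.snd.comp Primrec.snd))).of_eq fun ⟨_, b, _⟩ => by
        cases b <;> rfl
  exact Primrec.list_foldr Primrec.id (Primrec.const 0) hbit

/-- Reads a program `t ++ l` with `|t| = |l|` as a table `t` of the total codes and a number of
steps written in binary, and outputs the bits produced in that many steps. -/
def decodeRun : BStr →. BStr := fun p =>
  (runPart (fun i => guardedRule ((p.take (p.length / 2)).getD i false) i)
    (ofBits (p.drop (p.length / 2)))).map Prod.snd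

theorem partrec_decodeRun : Partrec decodeRun := by
  have hhalf : Primrec fun p : BStr => p.length / 2 :=
    Primrec.nat_div.comp Primrec.list_length (Primrec.const 2)
  refine Partrec.map ?_ (Computable.snd.comp Computable.snd)
  exact (partrec_runPart (σ := fun t i => guardedRule (t.getD i false) i) partrec_guardedRule).comp
    ((Primrec.list_take.comp hhalf Primrec.id).to_comp.pair
      (primrec_ofBits.comp (Primrec.list_drop.comp hhalf Primrec.id)).to_comp)

/-- The program from which `decodeRun` computes the first `n` bits of `runSeq totalRule`. -/
noncomputable def runProgram (n : ℕ) : BStr :=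
  (List.range n.size).map isTotalIndex ++ n.bits

theorem length_runProgram (n : ℕ) : (runProgram n).length = 2 * n.size := by
  rw [runProgram, List.length_append, List.length_map, List.length_range, ← Nat.size_eq_bits_len,
    two_mul]

theorem pref_runSeq_mem_decodeRun (n : ℕ) :
    pref (runSeq totalRule) n ∈ decodeRun (runProgram n) := by
  have hhalf : (runProgram n).length / 2 = ((List.range n.size).map isTotalIndex).length := by
    rw [length_runProgram, List.length_map, List.length_range]
    omega
  have hrun := runPart_eq_some (n := n) (ρ := totalRule)
    (σ := fun i => guardedRule (((List.range n.size).map isTotalIndex).getD i false) i)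
    fun i hi x => by simpa [hi] using guardedRule_isTotalIndex i x
  rw [decodeRun, hhalf, runProgram, List.take_left, List.drop_left, ofBits_bits, hrun,
    Part.map_some, run_snd]
  exact Part.mem_some _

theorem exists_C_le_of_partrec {D f : BStr →. BStr} (hD : OptimalDM D) (hf : Partrec f) :
    ∃ c : ℕ, ∀ p, ∀ x ∈ f p, C D x ≤ p.length + c := by
  obtain ⟨c, hc⟩ := hD.2 f hf
  refine ⟨c, fun p x hx => ENat.toNat_le_of_le_natCast ?_⟩
  push_cast
  exact (hc x).trans (add_le_add_left (iInf₂_le p hx) _)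

theorem natSize_le_logb {n : ℕ} : (n.size : ℝ) ≤ Real.logb 2 (n + 2) + 1 := by
  have hlog : n.size ≤ Nat.log 2 (n + 2) + 1 :=
    Nat.size_le.2 ((Nat.le_add_right n 2).trans_lt (Nat.lt_pow_succ_log_self one_lt_two _))
  calc (n.size : ℝ)
      ≤ Nat.log 2 (n + 2) + 1 := by exact_mod_cast hlog
    _ ≤ Real.logb 2 (n + 2) + 1 := by
      gcongr
      exact_mod_cast Real.natLog_le_logb (n + 2) 2

theorem exists_C_pref_runSeq_le {D : BStr →. BStr} (hD : OptimalDM D) :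
    ∃ c : ℝ, ∀ n : ℕ, (C D (pref (runSeq totalRule) n) : ℝ) ≤ c * Real.logb 2 (n + 2) := by
  obtain ⟨c, hc⟩ := exists_C_le_of_partrec hD partrec_decodeRun
  refine ⟨4 + c, fun n => ?_⟩
  have hC : (C D (pref (runSeq totalRule) n) : ℝ) ≤ 2 * n.size + c := by
    exact_mod_cast length_runProgram n ▸ hc _ _ (pref_runSeq_mem_decodeRun n)
  have hlog : 1 ≤ Real.logb 2 (n + 2) := by
    rw [Real.le_logb_iff_rpow_le one_lt_two (by positivity), Real.rpow_one]
    exact le_add_of_nonneg_left n.cast_nonneg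
  calc (C D (pref (runSeq totalRule) n) : ℝ)
      ≤ 2 * n.size + c := hC
    _ ≤ 2 * (Real.logb 2 (n + 2) + 1) + c := by
      gcongr
      exact natSize_le_logb
    _ ≤ 2 * (Real.logb 2 (n + 2) + Real.logb 2 (n + 2)) + c * Real.logb 2 (n + 2) := by
      gcongr
      exact le_mul_of_one_le_right c.cast_nonneg hlog
    _ = (4 + c) * Real.logb 2 (n + 2) := by ring

end Complexity

end Kolmogorov

/-- **Kolmogorov's theorem** separating the Mises–Church definition of a
Bernoulli sequence from complexity-based randomness: there is a Mises–Church
random sequence all of whose prefixes have complexity `O(log n)`. -/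
theorem stmt11 (D : BStr →. BStr) (hD : OptimalDM D) :
    ∃ ω : ℕ → Bool, MisesChurchRandom ω ∧
      ∃ c : ℝ, ∀ n : ℕ, 1 ≤ n →
        (C D (pref ω n) : ℝ) ≤ c * Real.logb 2 ((n : ℝ) + 2) := by
  obtain ⟨c, hc⟩ := Kolmogorov.exists_C_pref_runSeq_le hD
  refine ⟨Kolmogorov.runSeq Kolmogorov.totalRule, ?_, c, fun n _ => hc n⟩
  exact Kolmogorov.misesChurchRandom_of_isDescent (fun _ => Kolmogorov.exists_totalRule_eq)
    (Kolmogorov.isDescent_visit _) (Kolmogorov.isAlternating_runSeq _)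
end
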